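/- arXiv:2506.07571 — 11 statements merged into one kernel-verified Lean document; each statement's English description precedes it below -/
import Mathlib

section
/- There exist three points o₁, o₂, o₃ ∈ ℝ² with the following property: for every nonempty set D ⊆ [0,1) × [0,1) with size(D) > 0 there exist an index k ∈ {1,2,3} and integers ℓ, i, j such that D ⊆ σ(o_k, ℓ, i, j) and 2^ℓ ≤ 6 · size(D). (That is, every object contained in the unit square is 6-aligned with one of three fixed hierarchical grids.) -/
/-!
The three grids are centered at `(k/3, k/3)` for `k = 0, 1, 2`. Write `s` for the size of `D`.
If `s ≥ 1/6`, the unit square itself is a cell of the grid centered at the origin, of side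
`1 ≤ 6 s`. Otherwise choose `ℓ` with `3 s < 2 ^ ℓ ≤ 6 s`, so that `ℓ ≤ 0`. Since no power of two is
divisible by `3`, vertical lines at level `ℓ` of two different grids are at distance at least
`2 ^ ℓ / 3 > s` (`cut_unique`), so the first projection of `D` is cut by the lines of at most one
of the three grids, and likewise for the second projection. The remaining grid cuts neither
projection, hence has a cell containing `D` (`exists_cell_of_not_cut`).
-/

/-- The cell `σ(o, ℓ, i, j)` of the hierarchical grid centered at `o`. -/
noncomputable def gridCell (o : ℝ × ℝ) (ℓ i j : ℤ) : Set (ℝ × ℝ) :=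
  Set.Ico (o.1 + (i : ℝ) * 2 ^ ℓ) (o.1 + ((i : ℝ) + 1) * 2 ^ ℓ) ×ˢ
    Set.Ico (o.2 + (j : ℝ) * 2 ^ ℓ) (o.2 + ((j : ℝ) + 1) * 2 ^ ℓ)

/-- The side length of the smallest enclosing axis-parallel square of `D`. -/
noncomputable def sqSize (D : Set (ℝ × ℝ)) : ℝ :=
  max (sSup (Prod.fst '' D) - sInf (Prod.fst '' D))
      (sSup (Prod.snd '' D) - sInf (Prod.snd '' D))

/-- A grid line of spacing `L` with offset `k / 3` separates the endpoints of
`[a, b]`. A line through `a` is harmless and one through `b` is not, since cells are half-open. -/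
def Cut (k : ℤ) (L a b : ℝ) : Prop :=
  ∃ p : ℤ, a < (k : ℝ) / 3 + p * L ∧ (k : ℝ) / 3 + p * L ≤ b

lemma cut_unique {k k' : ℤ} (hk : ¬ (3 : ℤ) ∣ k - k') {n : ℕ} {L a b : ℝ}
    (hL : L * 2 ^ n = 1) (hab : 3 * (b - a) < L) (h : Cut k L a b) (h' : Cut k' L a b) :
    False := by
  obtain ⟨p, hp1, hp2⟩ := h
  obtain ⟨q, hq1, hq2⟩ := h'
  have h2 : (0 : ℝ) < 2 ^ n := by positivity
  -- `m` is the signed distance of the two lines in units of `L / 3`.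
  set m : ℤ := (k - k') * 2 ^ n + 3 * (p - q) with hm
  have hmr : (m : ℝ) = 3 * ((k : ℝ) / 3 + p * L - ((k' : ℝ) / 3 + q * L)) * 2 ^ n := by
    rw [hm]; push_cast
    linear_combination (-3 * ((p : ℝ) - q)) * hL
  have hu : (m : ℝ) < 1 := by
    rw [hmr, ← hL]
    exact mul_lt_mul_of_pos_right (by linarith) h2
  have hl : (-1 : ℝ) < m := by
    rw [hmr, ← hL, ← neg_mul]
    exact mul_lt_mul_of_pos_right (by linarith) h2
  have hu' : m < 1 := by exact_mod_cast hu
  have hl' : -1 < m := by exact_mod_cast hl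
  have hm0 : m = 0 := by omega
  have hd : (3 : ℤ) ∣ (k - k') * 2 ^ n := ⟨-(p - q), by linarith⟩
  rcases Int.prime_three.dvd_or_dvd hd with h | h
  · exact hk h
  · have := Int.prime_three.dvd_of_dvd_pow h
    omega

lemma exists_cell_of_not_cut {k : ℤ} {L a b : ℝ} (hL : 0 < L) (h : ¬ Cut k L a b) :
    ∃ i : ℤ, (k : ℝ) / 3 + i * L ≤ a ∧ b < (k : ℝ) / 3 + (i + 1) * L := by
  refine ⟨⌊(a - k / 3) / L⌋, ?_, ?_⟩
  · have := (le_div_iff₀ hL).1 (Int.floor_le ((a - (k : ℝ) / 3) / L))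
    linarith
  · by_contra! hb
    have := (div_lt_iff₀ hL).1 (Int.lt_floor_add_one ((a - (k : ℝ) / 3) / L))
    exact h ⟨⌊(a - k / 3) / L⌋ + 1, by push_cast; linarith, by push_cast; exact hb⟩

/-- Pigeonhole: each of the two intervals is cut by at most one of the three offsets. -/
lemma exists_not_cut {n : ℕ} {L a b c d : ℝ} (hL : L * 2 ^ n = 1)
    (hab : 3 * (b - a) < L) (hcd : 3 * (d - c) < L) :
    ∃ k : ℤ, (k = 0 ∨ k = 1 ∨ k = 2) ∧ ¬ Cut k L a b ∧ ¬ Cut k L c d := by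
  have x01 := cut_unique (k := 0) (k' := 1) (by decide) hL hab
  have x02 := cut_unique (k := 0) (k' := 2) (by decide) hL hab
  have x12 := cut_unique (k := 1) (k' := 2) (by decide) hL hab
  have y01 := cut_unique (k := 0) (k' := 1) (by decide) hL hcd
  have y02 := cut_unique (k := 0) (k' := 2) (by decide) hL hcd
  have y12 := cut_unique (k := 1) (k' := 2) (by decide) hL hcd
  by_contra! hc
  have h0 := hc 0 (by simp)
  have h1 := hc 1 (by simp)
  have h2 := hc 2 (by simp)
  tauto

theorem stmt0 :
    ∃ o₁ o₂ o₃ : ℝ × ℝ,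
      ∀ D : Set (ℝ × ℝ), D.Nonempty →
        D ⊆ Set.Ico (0 : ℝ) 1 ×ˢ Set.Ico (0 : ℝ) 1 →
        0 < sqSize D →
        ∃ o ∈ ({o₁, o₂, o₃} : Set (ℝ × ℝ)), ∃ ℓ i j : ℤ,
          D ⊆ gridCell o ℓ i j ∧ (2 : ℝ) ^ ℓ ≤ 6 * sqSize D := by
  refine ⟨(((0 : ℤ) : ℝ) / 3, ((0 : ℤ) : ℝ) / 3), (((1 : ℤ) : ℝ) / 3, ((1 : ℤ) : ℝ) / 3),
    (((2 : ℤ) : ℝ) / 3, ((2 : ℤ) : ℝ) / 3), ?_⟩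
  intro D _ hD hs
  by_cases hbig : 1 ≤ 6 * sqSize D
  · refine ⟨_, Or.inl rfl, 0, 0, 0, ?_, by simpa using hbig⟩
    simpa [gridCell] using hD
  push Not at hbig
  obtain ⟨ℓ, hl1, hl2⟩ := exists_mem_Ico_zpow (x := 6 * sqSize D) (y := (2 : ℝ))
    (by linarith) one_lt_two
  have hL : (0 : ℝ) < 2 ^ ℓ := by positivity
  rw [zpow_add_one₀ two_ne_zero] at hl2
  have hneg : ℓ < 0 := by
    by_contra! h
    have := one_le_zpow₀ (one_le_two : (1 : ℝ) ≤ 2) h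
    linarith
  obtain ⟨n, hn⟩ : ∃ n : ℕ, ℓ = -(n : ℤ) := ⟨ℓ.natAbs, by omega⟩
  have hLn : (2 : ℝ) ^ ℓ * 2 ^ n = 1 := by
    rw [hn, zpow_neg, zpow_natCast]
    exact inv_mul_cancel₀ (by positivity)
  have hx : sSup (Prod.fst '' D) - sInf (Prod.fst '' D) ≤ sqSize D := le_max_left _ _
  have hy : sSup (Prod.snd '' D) - sInf (Prod.snd '' D) ≤ sqSize D := le_max_right _ _
  obtain ⟨k, hk, hkx, hky⟩ := exists_not_cut hLn
    (a := sInf (Prod.fst '' D)) (b := sSup (Prod.fst '' D))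
    (c := sInf (Prod.snd '' D)) (d := sSup (Prod.snd '' D)) (by linarith) (by linarith)
  obtain ⟨i, hi1, hi2⟩ := exists_cell_of_not_cut hL hkx
  obtain ⟨j, hj1, hj2⟩ := exists_cell_of_not_cut hL hky
  refine ⟨((k : ℝ) / 3, (k : ℝ) / 3), ?_, ℓ, i, j, ?_, hl1⟩
  · rcases hk with rfl | rfl | rfl <;> simp
  -- Boundedness of the projections makes `sInf` and `sSup` genuine bounds.
  have bx : BddBelow (Prod.fst '' D) := ⟨0, by rintro _ ⟨z, hz, rfl⟩; exact (hD hz).1.1⟩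
  have bX : BddAbove (Prod.fst '' D) := ⟨1, by rintro _ ⟨z, hz, rfl⟩; exact (hD hz).1.2.le⟩
  have cy : BddBelow (Prod.snd '' D) := ⟨0, by rintro _ ⟨z, hz, rfl⟩; exact (hD hz).2.1⟩
  have cY : BddAbove (Prod.snd '' D) := ⟨1, by rintro _ ⟨z, hz, rfl⟩; exact (hD hz).2.2.le⟩
  intro z hz
  have zx : z.1 ∈ Prod.fst '' D := ⟨z, hz, rfl⟩
  have zy : z.2 ∈ Prod.snd '' D := ⟨z, hz, rfl⟩
  exact ⟨⟨hi1.trans (csInf_le bx zx), (le_csSup bX zx).trans_lt hi2⟩,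
    ⟨hj1.trans (csInf_le cy zy), (le_csSup cY zy).trans_lt hj2⟩⟩
end

section
/- Let c > 0, let o ∈ ℝ², and let D ⊆ ℝ² be a nonempty bounded set that is c-aligned with the hierarchical grid centered at o. If σ = σ(o,ℓ,i,j) is a cell of this hierarchical grid such that D ∩ σ ≠ ∅ and D is not contained in σ (so D meets the boundary of σ), then size(D) ≥ 2^ℓ / c. -/
/-- The one-dimensional case of laminarity: since `2 ^ ℓ` is an integer multiple of `2 ^ L`, the
endpoints of the coarse interval are also endpoints of fine intervals. -/
theorem Ico_dyadic_subset {a x : ℝ} {L ℓ I i : ℤ} (h : L ≤ ℓ)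
    (hx : x ∈ Set.Ico (a + (I : ℝ) * 2 ^ L) (a + ((I : ℝ) + 1) * 2 ^ L))
    (hx' : x ∈ Set.Ico (a + (i : ℝ) * 2 ^ ℓ) (a + ((i : ℝ) + 1) * 2 ^ ℓ)) :
    Set.Ico (a + (I : ℝ) * 2 ^ L) (a + ((I : ℝ) + 1) * 2 ^ L) ⊆
      Set.Ico (a + (i : ℝ) * 2 ^ ℓ) (a + ((i : ℝ) + 1) * 2 ^ ℓ) := by
  obtain ⟨n, rfl⟩ := Int.le.dest h
  have hu : (0 : ℝ) < 2 ^ L := by positivity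
  have hpow : (2 : ℝ) ^ (L + (n : ℤ)) = ((2 ^ n : ℤ) : ℝ) * 2 ^ L := by
    rw [zpow_add₀ two_ne_zero, zpow_natCast, mul_comm]
    push_cast
    rfl
  rw [hpow, ← mul_assoc, ← mul_assoc] at hx' ⊢
  generalize (2 ^ n : ℤ) = N at hx' ⊢
  have hlow : i * N < I + 1 := by
    have : (i : ℝ) * N < I + 1 := lt_of_mul_lt_mul_right (by linarith [hx'.1, hx.2]) hu.le
    exact_mod_cast this
  have hupp : I < (i + 1) * N := by
    have : (I : ℝ) < (i + 1) * N := lt_of_mul_lt_mul_right (by linarith [hx.1, hx'.2]) hu.le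
    exact_mod_cast this
  have hlow' : (i : ℝ) * N ≤ I := by exact_mod_cast Int.lt_add_one_iff.mp hlow
  have hupp' : (I : ℝ) + 1 ≤ (i + 1) * N := by exact_mod_cast Int.add_one_le_iff.mpr hupp
  apply Set.Ico_subset_Ico <;> gcongr

theorem gridCell_subset_of_le {o p : ℝ × ℝ} {L ℓ I J i j : ℤ} (h : L ≤ ℓ)
    (hp : p ∈ gridCell o L I J) (hp' : p ∈ gridCell o ℓ i j) :
    gridCell o L I J ⊆ gridCell o ℓ i j :=
  Set.prod_mono (Ico_dyadic_subset h hp.1 hp'.1) (Ico_dyadic_subset h hp.2 hp'.2)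

theorem stmt1 (c : ℝ) (hc : 0 < c) (o : ℝ × ℝ) (D : Set (ℝ × ℝ))
    (hne : D.Nonempty) (hbd : Bornology.IsBounded D)
    (halign : ∃ ℓ i j : ℤ, D ⊆ gridCell o ℓ i j ∧ (2 : ℝ) ^ ℓ ≤ c * sqSize D)
    (ℓ i j : ℤ) (hmeet : (D ∩ gridCell o ℓ i j).Nonempty)
    (hnsub : ¬ D ⊆ gridCell o ℓ i j) :
    (2 : ℝ) ^ ℓ / c ≤ sqSize D := by
  obtain ⟨L, I, J, hD, hL⟩ := halign
  obtain ⟨p, hpD, hp⟩ := hmeet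
  have hlt : ℓ < L := by
    by_contra hle
    exact hnsub (hD.trans (gridCell_subset_of_le (not_lt.mp hle) (hD hpD) hp))
  rw [div_le_iff₀' hc]
  exact (zpow_le_zpow_right₀ one_le_two hlt.le).trans hL
end

section
/- There is an absolute constant c > 0 with the following property. Let (D_i)_{i ∈ I} be a finite family of closed disks in ℝ² with |I| = n ≥ 1, let 𝒫 be a partition of I such that each part P ∈ 𝒫 is stabbed (there is a point contained in every disk D_i with i ∈ P), and for P ∈ 𝒫 let F_P = ⋃_{i∈P} D_i be its flower. If every point x ∈ ℝ² is contained in at most k of the flowers, then the number of unordered pairs {P, P'} of distinct parts with F_P ∩ F_{P'} ≠ ∅ is at most c · n · k. -/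
/-!
The bound comes from charging each intersecting pair of flowers to a disk. If two flowers meet, some
disk of one meets some disk of the other; charge the pair to the smaller of these two disks. By
scaling and compactness (`exists_net`) there is a fixed finite set `T` of vectors such that every
disk of radius at least `r` meeting the closed disk of center `a` and radius `r` contains one of the
points `a + r • t`, `t ∈ T`. Each of these points lies in at most `k` flowers, so each of the `n`
disks is charged at most `|T| * k` times.
-/

open Metric

/-- A universal net: a disk meeting a smaller disk `closedBall a r` contains one of boundedly many
points `a + r • t`. -/
lemma exists_net : ∃ T : Finset (EuclideanSpace ℝ (Fin 2)),
    ∀ (a b : EuclideanSpace ℝ (Fin 2)) (r R : ℝ), 0 < r → r ≤ R →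
      (closedBall a r ∩ closedBall b R).Nonempty → ∃ t ∈ T, a + r • t ∈ closedBall b R := by
  obtain ⟨T, -, hT, hcov⟩ := finite_cover_balls_of_compact
    (isCompact_closedBall (0 : EuclideanSpace ℝ (Fin 2)) 2) one_pos
  refine ⟨hT.toFinset, ?_⟩
  rintro a b r R hr hrR ⟨p, hpa, hpb⟩
  rw [mem_closedBall, dist_eq_norm] at hpa hpb
  have hR : 0 < R := hr.trans_le hrR
  -- `q` lies within `r` of `p`, and the closed disk of radius `r` around `q` is inside `closedBall b R`.
  set q := p + (r / R) • (b - p) with hq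
  have hqa : ‖q - a‖ ≤ 2 * r := by
    have h1 : q - a = (p - a) - (r / R) • (p - b) := by rw [hq]; module
    have h2 : ‖(r / R) • (p - b)‖ ≤ r := by
      rw [norm_smul, Real.norm_of_nonneg (by positivity)]
      calc r / R * ‖p - b‖ ≤ r / R * R := by gcongr
        _ = r := by field_simp
    rw [h1]
    linarith [norm_sub_le (p - a) ((r / R) • (p - b))]
  have hqb : ‖q - b‖ ≤ R - r := by
    have h1 : q - b = (1 - r / R) • (p - b) := by rw [hq]; module
    have h0 : 0 ≤ 1 - r / R := sub_nonneg.2 ((div_le_one hR).2 hrR)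
    rw [h1, norm_smul, Real.norm_of_nonneg h0]
    calc (1 - r / R) * ‖p - b‖ ≤ (1 - r / R) * R := by gcongr
      _ = R - r := by field_simp
  have hmem : r⁻¹ • (q - a) ∈ closedBall (0 : EuclideanSpace ℝ (Fin 2)) 2 := by
    rw [mem_closedBall_zero_iff, norm_smul, norm_inv, Real.norm_of_nonneg hr.le,
      inv_mul_le_iff₀ hr]
    linarith
  obtain ⟨t, ht, htq⟩ := Set.mem_iUnion₂.1 (hcov hmem)
  refine ⟨t, hT.mem_toFinset.2 ht, ?_⟩
  rw [mem_ball, dist_eq_norm] at htq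
  have h1 : a + r • t - b = (q - b) - r • (r⁻¹ • (q - a) - t) := by
    rw [smul_sub, smul_inv_smul₀ hr.ne']; abel
  have h2 : ‖r • (r⁻¹ • (q - a) - t)‖ ≤ r := by
    rw [norm_smul, Real.norm_of_nonneg hr.le]
    nlinarith
  rw [mem_closedBall, dist_eq_norm, h1]
  linarith [norm_sub_le (q - b) (r • (r⁻¹ • (q - a) - t))]

theorem stmt7 :
    ∃ c : ℝ, 0 < c ∧
      ∀ (n : ℕ), 1 ≤ n →
        ∀ (a : Fin n → EuclideanSpace ℝ (Fin 2)) (r : Fin n → ℝ),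
          (∀ i, 0 < r i) →
          ∀ Part : Finpartition (Finset.univ : Finset (Fin n)),
            (∀ P ∈ Part.parts, ∃ x : EuclideanSpace ℝ (Fin 2),
                ∀ i ∈ P, x ∈ closedBall (a i) (r i)) →
            ∀ k : ℕ,
              (∀ x : EuclideanSpace ℝ (Fin 2),
                ({P : Finset (Fin n) | P ∈ Part.parts ∧ ∃ i ∈ P,
                    x ∈ closedBall (a i) (r i)}).ncard ≤ k) →
              (({q : Sym2 (Finset (Fin n)) | ∃ P ∈ Part.parts, ∃ P' ∈ Part.parts,
                  q = s(P, P') ∧ P ≠ P' ∧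
                  ((⋃ i ∈ P, closedBall (a i) (r i)) ∩
                    ⋃ i ∈ P', closedBall (a i) (r i)).Nonempty}).ncard : ℝ)
                ≤ c * n * k := by
  classical
  obtain ⟨T, hT⟩ := exists_net
  refine ⟨T.card + 1, by positivity, ?_⟩
  intro n _ a r hr Part _ k hk
  let G : EuclideanSpace ℝ (Fin 2) → Finset (Finset (Fin n)) := fun x =>
    Part.parts.filter fun P => ∃ i ∈ P, x ∈ closedBall (a i) (r i)
  have hG : ∀ x, (G x).card ≤ k := by
    intro x
    rw [← Set.ncard_coe_finset]
    simpa [G] using hk x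
  -- All pairs that can be charged to a disk `i` through a net point `t`.
  let U : Finset (Sym2 (Finset (Fin n))) :=
    ((Finset.univ : Finset (Fin n)) ×ˢ T).biUnion fun it =>
      (G (a it.1 + r it.1 • it.2)).image fun P' => s(Part.part it.1, P')
  have hU : U.card ≤ n * T.card * k := by
    have := Finset.card_biUnion_le_card_mul ((Finset.univ : Finset (Fin n)) ×ˢ T)
      (fun it => (G (a it.1 + r it.1 • it.2)).image fun P' => s(Part.part it.1, P')) k
      (fun it _ => Finset.card_image_le.trans (hG _))
    simpa [U, Finset.card_product] using this
  have key : ∀ P ∈ Part.parts, ∀ P' ∈ Part.parts, ∀ i ∈ P, ∀ j ∈ P',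
      (closedBall (a i) (r i) ∩ closedBall (a j) (r j)).Nonempty → r i ≤ r j →
      s(P, P') ∈ U := by
    intro P hP P' hP' i hi j hj hne hij
    obtain ⟨t, ht, hmem⟩ := hT _ _ _ _ (hr i) hij hne
    refine Finset.mem_biUnion.2 ⟨(i, t), by simp [ht], Finset.mem_image.2 ⟨P', ?_, ?_⟩⟩
    · exact Finset.mem_filter.2 ⟨hP', j, hj, hmem⟩
    · rw [Part.part_eq_of_mem hP hi]
  have hsub : {q : Sym2 (Finset (Fin n)) | ∃ P ∈ Part.parts, ∃ P' ∈ Part.parts,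
      q = s(P, P') ∧ P ≠ P' ∧
      ((⋃ i ∈ P, closedBall (a i) (r i)) ∩
        ⋃ i ∈ P', closedBall (a i) (r i)).Nonempty} ⊆ (U : Set (Sym2 (Finset (Fin n)))) := by
    rintro _ ⟨P, hP, P', hP', rfl, -, x, hx, hx'⟩
    obtain ⟨i, hi, hxi⟩ := Set.mem_iUnion₂.1 hx
    obtain ⟨j, hj, hxj⟩ := Set.mem_iUnion₂.1 hx'
    rcases le_total (r i) (r j) with h | h
    · exact key P hP P' hP' i hi j hj ⟨x, hxi, hxj⟩ h
    · rw [Sym2.eq_swap]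
      exact key P' hP' P hP j hj i hi ⟨x, hxj, hxi⟩ h
  have hle := Set.ncard_le_ncard hsub U.finite_toSet
  rw [Set.ncard_coe_finset] at hle
  calc _ ≤ ((n * T.card * k : ℕ) : ℝ) := by exact_mod_cast hle.trans hU
    _ = (T.card : ℝ) * n * k := by push_cast; ring
    _ ≤ (T.card + 1) * n * k := by gcongr; linarith
end

section
/- For every α with 0 < α ≤ π/3 there is a constant c = c(α) > 0 with the following property. Let (Δ_i)_{i ∈ I} be a finite family of α-fat triangles in ℝ² with |I| = n ≥ 1, let 𝒫 be a partition of I such that each part P ∈ 𝒫 is stabbed (there is a point contained in every triangle Δ_i with i ∈ P), and for P ∈ 𝒫 let F_P = ⋃_{i∈P} Δ_i be its spiky flower. If every point x ∈ ℝ² is contained in at most k of the spiky flowers, then the number of unordered pairs {P, P'} of distinct parts with F_P ∩ F_{P'} ≠ ∅ is at most c · n · k. -/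
/-!
The proof charges each pair of meeting flowers to a triangle. Whenever two flowers meet, some
triangle `Δ i` of one meets some triangle `Δ j` of the other, and after exchanging the
two, `Δ i` is not larger than `Δ j`; the pair is charged to `i`.

A fat triangle of size `d` contains a disc of radius `ρ d`, where `ρ = sin α / 6`
(`IsFatTriangle.isFatBody`). Shrinking `Δ j` towards a point of `Δ i ∩ Δ j` until it has the size
`s` of `Δ i` shows that `Δ j` contains a disc of radius `ρ s` whose centre lies within `2 s` of a
fixed point of `Δ i` (`IsFatBody.hit`). Hence `Δ j` contains one of the points of a fixed finite
`ρ`-net of the disc of radius `2`, scaled by `s` and translated to `Δ i`. Each of these net points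
lies in at most `k` flowers, so every `i` is charged at most `|N| * k` times, `N` being the net.
-/

/-- An `α`-fat triangle in the Euclidean plane: the convex hull of three affinely
independent points, each of whose interior angles is at least `α`. -/
def IsFatTriangle (α : ℝ) (Δ : Set (EuclideanSpace ℝ (Fin 2))) : Prop :=
  ∃ u v w : EuclideanSpace ℝ (Fin 2),
    AffineIndependent ℝ ![u, v, w] ∧
    Δ = convexHull ℝ {u, v, w} ∧
    α ≤ EuclideanGeometry.angle w u v ∧
    α ≤ EuclideanGeometry.angle u v w ∧
    α ≤ EuclideanGeometry.angle v w u

/-- The cross product (signed area of the parallelogram) of two plane vectors. -/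
def planeCross (x y : EuclideanSpace ℝ (Fin 2)) : ℝ := x 0 * y 1 - x 1 * y 0

/-- A convex set of diameter at most `d > 0` that contains a disc of radius `ρ * d`. -/
def IsFatBody (ρ d : ℝ) (K : Set (EuclideanSpace ℝ (Fin 2))) : Prop :=
  0 < d ∧ Convex ℝ K ∧ (∀ x ∈ K, ∀ y ∈ K, dist x y ≤ d) ∧
    ∃ g, Metric.closedBall g (ρ * d) ⊆ K

open InnerProductGeometry in
lemma abs_planeCross (x y : EuclideanSpace ℝ (Fin 2)) :
    |planeCross x y| = Real.sin (angle x y) * (‖x‖ * ‖y‖) := by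
  rw [sin_angle_mul_norm_mul_norm, ← Real.sqrt_sq_eq_abs]
  congr 1
  simp only [planeCross, PiLp.inner_apply, Fin.sum_univ_two, RCLike.inner_apply, conj_trivial]
  ring

open InnerProductGeometry in
lemma abs_planeCross_le (x y : EuclideanSpace ℝ (Fin 2)) :
    |planeCross x y| ≤ ‖x‖ * ‖y‖ := by
  rw [abs_planeCross]
  exact mul_le_of_le_one_left (by positivity) (Real.sin_le_one _)

/-- Twice the area of a fat triangle is at least `sin α` times the product of two of its sides. -/
lemma sin_mul_dist_mul_dist_le {α : ℝ} (hα0 : 0 < α) {u v w : EuclideanSpace ℝ (Fin 2)}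
    (huv : v ≠ u) (h1 : α ≤ EuclideanGeometry.angle w u v)
    (h2 : α ≤ EuclideanGeometry.angle u v w) (h3 : α ≤ EuclideanGeometry.angle v w u) :
    Real.sin α * (dist u v * dist u w) ≤ |planeCross (v - u) (w - u)| := by
  have hsum := EuclideanGeometry.angle_add_angle_add_angle_eq_pi w huv
  have e1 : EuclideanGeometry.angle w u v = InnerProductGeometry.angle (v - u) (w - u) := by
    rw [EuclideanGeometry.angle_comm]; rfl
  rw [abs_planeCross, ← e1, dist_comm u v, dist_comm u w, dist_eq_norm, dist_eq_norm]
  apply mul_le_mul_of_nonneg_right _ (by positivity)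
  have hpi : EuclideanGeometry.angle w u v ≤ Real.pi - α := by
    rw [EuclideanGeometry.angle_comm w u v] at *
    rw [EuclideanGeometry.angle_comm v w u] at *
    rw [EuclideanGeometry.angle_comm u v w] at *
    linarith
  rcases le_total (EuclideanGeometry.angle w u v) (Real.pi / 2) with h | h
  · exact Real.sin_le_sin_of_le_of_le_pi_div_two (by linarith [Real.pi_pos]) h h1
  · rw [← Real.sin_pi_sub (EuclideanGeometry.angle w u v)]
    exact Real.sin_le_sin_of_le_of_le_pi_div_two (by linarith [Real.pi_pos]) (by linarith)
      (by linarith)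

/-- A point with barycentric coordinates (ratios of signed areas) nonnegative lies in the
triangle. -/
lemma mem_convexHull_of_planeCross {u v w x : EuclideanSpace ℝ (Fin 2)} {D : ℝ}
    (hD : D = planeCross (v - u) (w - u)) (hD0 : D ≠ 0)
    (h1 : 0 ≤ planeCross (v - x) (w - x) / D) (h2 : 0 ≤ planeCross (w - x) (u - x) / D)
    (h3 : 0 ≤ planeCross (u - x) (v - x) / D) : x ∈ convexHull ℝ {u, v, w} := by
  have hsum : planeCross (v - x) (w - x) / D + planeCross (w - x) (u - x) / D +
      planeCross (u - x) (v - x) / D = 1 := by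
    field_simp
    rw [hD]
    simp only [planeCross, PiLp.sub_apply]
    ring
  have hx : x = (planeCross (v - x) (w - x) / D) • u + (planeCross (w - x) (u - x) / D) • v +
      (planeCross (u - x) (v - x) / D) • w := by
    ext i
    simp only [PiLp.add_apply, PiLp.smul_apply, smul_eq_mul]
    field_simp
    rw [hD]
    fin_cases i <;> simp [planeCross] <;> ring
  have hc := convex_convexHull ℝ ({u, v, w} : Set (EuclideanSpace ℝ (Fin 2)))
  have key := hc.sum_mem (t := Finset.univ)
    (w := ![planeCross (v - x) (w - x) / D, planeCross (w - x) (u - x) / D,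
      planeCross (u - x) (v - x) / D]) (z := ![u, v, w])
    (by intro i _; fin_cases i <;> simpa)
    (by simpa [Fin.sum_univ_three] using hsum)
    (by intro i _; apply subset_convexHull; fin_cases i <;> simp)
  rw [hx]
  simpa [Fin.sum_univ_three] using key

/-- The disc is centred at the centroid: there all barycentric coordinates equal `1 / 3`, and a
displacement by `δ` changes each of them by at most `δ` times the longest side over twice the
area. -/
lemma IsFatTriangle.isFatBody {α : ℝ} (hα0 : 0 < α) (hα : α ≤ Real.pi / 3)
    {Δ : Set (EuclideanSpace ℝ (Fin 2))} (h : IsFatTriangle α Δ) :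
    ∃ d, IsFatBody (Real.sin α / 6) d Δ := by
  obtain ⟨u, v, w, hind, rfl, h1, h2, h3⟩ := h
  have hinj := hind.injective
  have huv : u ≠ v := fun h => by simpa using @hinj 0 1 (by simpa using h)
  have huw : u ≠ w := fun h => by simpa using @hinj 0 2 (by simpa using h)
  have hvw : v ≠ w := fun h => by simpa using @hinj 1 2 (by simpa using h)
  have hs : 0 < Real.sin α := Real.sin_pos_of_pos_of_lt_pi hα0 (by linarith [Real.pi_pos])
  obtain ⟨L, hL⟩ : ∃ L, L = max (dist u v) (max (dist u w) (dist v w)) := ⟨_, rfl⟩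
  obtain ⟨D, hD⟩ : ∃ D, D = planeCross (v - u) (w - u) := ⟨_, rfl⟩
  have a1 := sin_mul_dist_mul_dist_le hα0 huv.symm h1 h2 h3
  have a2 := sin_mul_dist_mul_dist_le hα0 hvw.symm h2 h3 h1
  have a3 := sin_mul_dist_mul_dist_le hα0 huw h3 h1 h2
  have e2 : planeCross (w - v) (u - v) = D := by
    rw [hD]; simp only [planeCross, PiLp.sub_apply]; ring
  have e3 : planeCross (u - w) (v - w) = D := by
    rw [hD]; simp only [planeCross, PiLp.sub_apply]; ring
  rw [← hD] at a1
  rw [e2, dist_comm v u] at a2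
  rw [e3, dist_comm w u, dist_comm w v] at a3
  have p1 := dist_pos.2 huv
  have p2 := dist_pos.2 huw
  have p3 := dist_pos.2 hvw
  have t1 := dist_triangle u w v
  have t2 := dist_triangle u v w
  have t3 := dist_triangle v u w
  rw [dist_comm w v] at t1
  rw [dist_comm v u] at t3
  have l1 : dist u v ≤ L := by rw [hL]; exact le_max_left _ _
  have l2 : dist u w ≤ L := by rw [hL]; exact le_max_of_le_right (le_max_left _ _)
  have l3 : dist v w ≤ L := by rw [hL]; exact le_max_of_le_right (le_max_right _ _)
  have hL0 : 0 < L := by linarith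
  -- One of the two other sides is at least half of the longest side.
  have hDL : Real.sin α / 2 * L ^ 2 ≤ |D| := by
    have aux : ∀ {p q r : ℝ}, 0 < p → p ≤ q + r → Real.sin α * (p * q) ≤ |D| →
        Real.sin α * (p * r) ≤ |D| → Real.sin α / 2 * p ^ 2 ≤ |D| := by
      intro p q r hp hpq hq hr
      have : Real.sin α * p * p ≤ Real.sin α * p * (q + r) :=
        mul_le_mul_of_nonneg_left hpq (by positivity)
      nlinarith
    rcases max_choice (dist u v) (max (dist u w) (dist v w)) with hm | hm
    · rw [hL, hm]
      exact aux p1 t1 a1 (by linarith)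
    · rcases max_choice (dist u w) (dist v w) with hm' | hm'
      · rw [hL, hm, hm']
        exact aux p2 t2 (by linarith) (by linarith)
      · rw [hL, hm, hm']
        exact aux p3 t3 (by linarith) (by linarith)
  have hDpos : 0 < |D| := lt_of_lt_of_le (by positivity) hDL
  have hD0 : D ≠ 0 := abs_pos.1 hDpos
  refine ⟨L, hL0, convex_convexHull ℝ _, ?_, (3 : ℝ)⁻¹ • (u + v + w), ?_⟩
  · intro x hx y hy
    obtain ⟨x', hx', y', hy', hxy⟩ := convexHull_exists_dist_ge2 hx hy
    refine hxy.trans ?_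
    simp only [Set.mem_insert_iff, Set.mem_singleton_iff] at hx' hy'
    rcases hx' with rfl | rfl | rfl <;> rcases hy' with rfl | rfl | rfl <;>
      first
      | (rw [dist_self]; exact hL0.le)
      | assumption
      | (rw [dist_comm]; assumption)
  · intro x hx
    rw [Metric.mem_closedBall, dist_eq_norm] at hx
    have bound : ∀ y : EuclideanSpace ℝ (Fin 2), ‖y‖ ≤ L →
        0 ≤ 1 / 3 + planeCross (x - (3 : ℝ)⁻¹ • (u + v + w)) y / D := by
      intro y hy
      have c1 := (abs_planeCross_le (x - (3 : ℝ)⁻¹ • (u + v + w)) y).trans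
        (mul_le_mul hx hy (norm_nonneg _) (by positivity))
      have c2 : |planeCross (x - (3 : ℝ)⁻¹ • (u + v + w)) y / D| ≤ 1 / 3 := by
        rw [abs_div, div_le_iff₀ hDpos]
        nlinarith
      linarith [neg_le_of_abs_le c2]
    apply mem_convexHull_of_planeCross hD hD0
    · convert bound (v - w) (by rwa [← dist_eq_norm]) using 1
      field_simp
      rw [hD]
      simp [planeCross]
      ring
    · convert bound (w - u) (by rwa [← dist_eq_norm, dist_comm]) using 1
      field_simp
      rw [hD]
      simp [planeCross]
      ring
    · convert bound (u - v) (by rwa [← dist_eq_norm]) using 1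
      field_simp
      rw [hD]
      simp [planeCross]
      ring

/-- A fat body of size `d` through a point near `p` contains a point of any sufficiently fine net
around `p` at each scale `s ≤ d`, because it contains its own copy shrunk to size `s` towards the
common point `z`. -/
lemma IsFatBody.hit {ρ d s : ℝ} {K : Set (EuclideanSpace ℝ (Fin 2))} (hρ : 0 < ρ)
    (hK : IsFatBody ρ d K)
    (hs : 0 < s) (hsd : s ≤ d) {p z : EuclideanSpace ℝ (Fin 2)} (hz : z ∈ K) (hpz : dist z p ≤ s)
    {N : Finset (EuclideanSpace ℝ (Fin 2))}
    (hN : ∀ x : EuclideanSpace ℝ (Fin 2), ‖x‖ ≤ 2 → ∃ y ∈ N, dist x y ≤ ρ) :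
    ∃ y ∈ N, p + s • y ∈ K := by
  obtain ⟨hd, hconv, hdiam, g, hg⟩ := hK
  have hgK : g ∈ K := hg (Metric.mem_closedBall_self (by positivity))
  -- `p + s • x` is the centre of the shrunken disc.
  obtain ⟨x, hx⟩ : ∃ x, x = s⁻¹ • (z - p) + d⁻¹ • (g - z) := ⟨_, rfl⟩
  have hx2 : ‖x‖ ≤ 2 := by
    have n1 : ‖s⁻¹ • (z - p)‖ ≤ 1 := by
      rw [norm_smul, ← dist_eq_norm, Real.norm_of_nonneg (by positivity), inv_mul_le_one₀ hs]
      exact hpz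
    have n2 : ‖d⁻¹ • (g - z)‖ ≤ 1 := by
      rw [norm_smul, ← dist_eq_norm, Real.norm_of_nonneg (by positivity), inv_mul_le_one₀ hd]
      exact hdiam g hgK z hz
    rw [hx]
    linarith [norm_add_le (s⁻¹ • (z - p)) (d⁻¹ • (g - z))]
  obtain ⟨y, hyN, hxy⟩ := hN x hx2
  refine ⟨y, hyN, ?_⟩
  have hq : g + d • (y - x) ∈ K := by
    apply hg
    rw [Metric.mem_closedBall, dist_eq_norm, add_sub_cancel_left, norm_smul, ← dist_eq_norm,
      dist_comm, Real.norm_of_nonneg hd.le, mul_comm]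
    exact mul_le_mul_of_nonneg_right hxy hd.le
  have hmem := hconv hz hq (a := 1 - s / d) (b := s / d)
    (by rw [sub_nonneg, div_le_one hd]; exact hsd) (by positivity) (by ring)
  convert hmem using 1
  rw [hx]
  ext i
  simp
  field_simp
  ring

theorem stmt8 (α : ℝ) (hα0 : 0 < α) (hα : α ≤ Real.pi / 3) :
    ∃ c : ℝ, 0 < c ∧
      ∀ (n : ℕ), 1 ≤ n →
        ∀ (Δ : Fin n → Set (EuclideanSpace ℝ (Fin 2))),
          (∀ i, IsFatTriangle α (Δ i)) →
          ∀ Part : Finpartition (Finset.univ : Finset (Fin n)),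
            (∀ P ∈ Part.parts, ∃ x : EuclideanSpace ℝ (Fin 2), ∀ i ∈ P, x ∈ Δ i) →
            ∀ k : ℕ,
              (∀ x : EuclideanSpace ℝ (Fin 2),
                ({P : Finset (Fin n) | P ∈ Part.parts ∧ ∃ i ∈ P, x ∈ Δ i}).ncard ≤ k) →
              (({q : Sym2 (Finset (Fin n)) | ∃ P ∈ Part.parts, ∃ P' ∈ Part.parts,
                  q = s(P, P') ∧ P ≠ P' ∧
                  ((⋃ i ∈ P, Δ i) ∩ ⋃ i ∈ P', Δ i).Nonempty}).ncard : ℝ)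
                ≤ c * n * k := by
  classical
  have hs : 0 < Real.sin α := Real.sin_pos_of_pos_of_lt_pi hα0 (by linarith [Real.pi_pos])
  have hρ : 0 < Real.sin α / 6 := by positivity
  obtain ⟨N, hN⟩ : ∃ N : Finset (EuclideanSpace ℝ (Fin 2)),
      ∀ x : EuclideanSpace ℝ (Fin 2), ‖x‖ ≤ 2 → ∃ y ∈ N, dist x y ≤ Real.sin α / 6 := by
    obtain ⟨t, -, htf, ht⟩ :=
      (isCompact_closedBall (0 : EuclideanSpace ℝ (Fin 2)) 2).finite_cover_balls hρ
    refine ⟨htf.toFinset, fun x hx => ?_⟩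
    have := ht (mem_closedBall_zero_iff.2 hx)
    simp only [Set.mem_iUnion, Metric.mem_ball] at this
    obtain ⟨y, hy, hxy⟩ := this
    exact ⟨y, htf.mem_toFinset.2 hy, hxy.le⟩
  refine ⟨N.card + 1, by positivity, ?_⟩
  intro n _ Δ hΔ Part _ k hk
  choose d hd using fun i => (hΔ i).isFatBody hα0 hα
  have hne : ∀ i, ∃ p, p ∈ Δ i := fun i => by
    obtain ⟨hdi, -, -, g, hg⟩ := hd i
    exact ⟨g, hg (Metric.mem_closedBall_self (by positivity))⟩
  choose p hp using hne
  -- The flowers containing the net point `y` of the triangle `i`.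
  let H : Fin n × EuclideanSpace ℝ (Fin 2) → Finset (Finset (Fin n)) := fun a =>
    Part.parts.filter fun Q => ∃ j ∈ Q, p a.1 + d a.1 • a.2 ∈ Δ j
  let T : Finset (Sym2 (Finset (Fin n))) :=
    (Finset.univ ×ˢ N).biUnion fun a => (H a).image fun Q => s(Part.part a.1, Q)
  have hH : ∀ a, (H a).card ≤ k := fun a => by
    have := hk (p a.1 + d a.1 • a.2)
    rwa [← Finset.coe_filter, Set.ncard_coe_finset] at this
  have hT : T.card ≤ n * N.card * k := by
    refine (Finset.card_biUnion_le_card_mul _ _ k fun a _ =>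
      Finset.card_image_le.trans (hH a)).trans ?_
    simp
  have charge : ∀ i j, ∀ Q ∈ Part.parts, j ∈ Q → d i ≤ d j → (Δ i ∩ Δ j).Nonempty →
      s(Part.part i, Q) ∈ T := by
    rintro i j Q hQ hj hij ⟨z, hzi, hzj⟩
    obtain ⟨y, hy, hmem⟩ := (hd j).hit hρ (hd i).1 hij hzj ((hd i).2.2.1 z hzi (p i) (hp i)) hN
    refine Finset.mem_biUnion.2 ⟨(i, y), by simpa using hy, Finset.mem_image_of_mem _ ?_⟩
    exact Finset.mem_filter.2 ⟨hQ, j, hj, hmem⟩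
  have hsub : {q : Sym2 (Finset (Fin n)) | ∃ P ∈ Part.parts, ∃ P' ∈ Part.parts,
      q = s(P, P') ∧ P ≠ P' ∧ ((⋃ i ∈ P, Δ i) ∩ ⋃ i ∈ P', Δ i).Nonempty} ⊆ (T : Set _) := by
    rintro q ⟨P, hP, P', hP', rfl, -, z, hz, hz'⟩
    simp only [Set.mem_iUnion] at hz hz'
    obtain ⟨i, hi, hzi⟩ := hz
    obtain ⟨j, hj, hzj⟩ := hz'
    rcases le_total (d i) (d j) with hij | hij
    · have := charge i j P' hP' hj hij ⟨z, hzi, hzj⟩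
      rwa [Part.part_eq_of_mem hP hi] at this
    · have := charge j i P hP hi hij ⟨z, hzj, hzi⟩
      rwa [Part.part_eq_of_mem hP' hj, Sym2.eq_swap] at this
  have hcard := (Set.ncard_le_ncard hsub T.finite_toSet).trans
    ((Set.ncard_coe_finset T).le.trans hT)
  calc _ ≤ ((n * N.card * k : ℕ) : ℝ) := by exact_mod_cast hcard
    _ = N.card * n * k := by push_cast; ring
    _ ≤ (N.card + 1) * n * k := by gcongr; linarith
end

section
/- Let c, p, c', p' be points in the Euclidean plane ℝ², let r = dist(c, p) and r' = dist(c', p'). If the closed segments [c, p] and [c', p'] have a common point, then dist(c', p) ≤ r' or dist(c, p') ≤ r. Equivalently: if p lies on the boundary of the closed disk D with center c and radius r, p' lies on the boundary of the closed disk D' with center c' and radius r', and the segment from c to p intersects the segment from c' to p', then p ∈ D' or p' ∈ D. -/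
/-!
Let `x` be a common point of the two segments. If `p` is at least as close to `x` as `p'` is, then
`dist c' p ≤ dist c' x + dist x p ≤ dist c' x + dist x p' = dist c' p'`, by the triangle inequality
and additivity of distance along a segment. Otherwise the same argument applies with the two
segments exchanged.
-/

theorem stmt9 (c p c' p' : EuclideanSpace ℝ (Fin 2))
    (h : (segment ℝ c p ∩ segment ℝ c' p').Nonempty) :
    dist c' p ≤ dist c' p' ∨ dist c p' ≤ dist c p := by
  obtain ⟨x, hx, hx'⟩ := h
  have e := dist_add_dist_of_mem_segment hx
  have e' := dist_add_dist_of_mem_segment hx'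
  have t := dist_triangle c' x p
  have t' := dist_triangle c x p'
  rcases le_total (dist x p) (dist x p') with hle | hle
  · left; linarith
  · right; linarith
end

section
/- Let (D_i)_{i ∈ I} be a finite family of closed disks in ℝ² with |I| = n, and suppose that every point x ∈ ℝ² is contained in at most k of the disks. Then the number of unordered pairs {i, j} of distinct indices with D_i ∩ D_j ≠ ∅ is at most 9 · k · n. -/
/-!
Charge every intersecting pair to the disk of smaller radius. If `D_j` meets `D_i` and
`r_i ≤ r_j`, then `D_j` contains a disk of radius `r_i` that lies inside the concentric disk
`3 D_i` (`exists_shrunk_ball`). These shrunken disks still cover every point at most `k` times and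
each has one ninth of the area of `3 D_i`, so there are at most `9 k` of them
(`card_larger_neighbours_le`). Summing over `i` gives the bound.
-/

open Metric MeasureTheory

lemma exists_shrunk_ball {E : Type*} [NormedAddCommGroup E] [NormedSpace ℝ E] {x y : E} {s t : ℝ}
    (hs : 0 < s) (hst : s ≤ t) (h : (closedBall x s ∩ closedBall y t).Nonempty) :
    ∃ c, closedBall c s ⊆ closedBall x (3 * s) ∧ closedBall c s ⊆ closedBall y t := by
  obtain ⟨z, hzx, hzy⟩ := h
  rw [mem_closedBall] at hzx hzy
  have hxy : dist x y ≤ (t - s) + 2 * s := by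
    have := dist_triangle_left x y z
    linarith
  -- The centre is taken on the segment from `x` to `y`.
  obtain ⟨c, hxc, hcy⟩ := exists_dist_le_le (by linarith) (by linarith) hxy
  rw [dist_comm] at hxc
  exact ⟨c, closedBall_subset_closedBall' (by linarith),
    closedBall_subset_closedBall' (by linarith)⟩

/-- Area comparison: a finite family of sets of measure `v`, all inside a set of measure at most
`m * v` and covering each point at most `k` times, has at most `m * k` members. -/
lemma card_le_of_multiplicity {α ι : Type*} [MeasurableSpace α] (μ : Measure α) (J : Finset ι)
    (S : ι → Set α) (B : Set α) (v : ENNReal) (m k : ℕ) (hS : ∀ j ∈ J, MeasurableSet (S j))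
    (hB : MeasurableSet B) (hv0 : v ≠ 0) (hv : v ≠ ⊤) (hSv : ∀ j ∈ J, μ (S j) = v)
    (hSB : ∀ j ∈ J, S j ⊆ B) (hBv : μ B ≤ m * v)
    (hk : ∀ x, {j | j ∈ J ∧ x ∈ S j}.ncard ≤ k) : J.card ≤ m * k := by
  classical
  have hpt : ∀ x, ∑ j ∈ J, (S j).indicator (fun _ => (1 : ENNReal)) x
      ≤ B.indicator (fun _ => (k : ENNReal)) x := by
    intro x
    by_cases hx : x ∈ B
    · rw [Set.indicator_of_mem hx]
      have h1 : ∑ j ∈ J, (S j).indicator (fun _ => (1 : ENNReal)) x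
          = ((J.filter fun j => x ∈ S j).card : ENNReal) := by
        simp [Set.indicator_apply]
      rw [h1]
      have h2 := hk x
      rw [← Finset.coe_filter, Set.ncard_coe_finset] at h2
      exact_mod_cast h2
    · refine (Finset.sum_eq_zero fun j hj => ?_).trans_le zero_le
      exact Set.indicator_of_notMem (fun h => hx (hSB j hj h)) _
  have hint := lintegral_mono (μ := μ) hpt
  rw [lintegral_finsetSum' _ fun j hj => (measurable_const.indicator (hS j hj)).aemeasurable,
    lintegral_indicator_const hB,
    Finset.sum_congr rfl (g := fun _ => v) fun j hj => by
      rw [lintegral_indicator_const (hS j hj), one_mul, hSv j hj],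
    Finset.sum_const, nsmul_eq_mul] at hint
  have hfin : (J.card : ENNReal) * v ≤ ((m * k : ℕ) : ENNReal) * v := by
    calc (J.card : ENNReal) * v ≤ k * μ B := hint
      _ ≤ k * (m * v) := by gcongr
      _ = ((m * k : ℕ) : ENNReal) * v := by push_cast; ring
  exact_mod_cast (ENNReal.mul_le_mul_iff_left hv0 hv).1 hfin

lemma card_larger_neighbours_le {n k : ℕ} (a : Fin n → EuclideanSpace ℝ (Fin 2)) (r : Fin n → ℝ)
    (hr : ∀ i, 0 < r i)
    (hply : ∀ x : EuclideanSpace ℝ (Fin 2),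
      ({i : Fin n | x ∈ closedBall (a i) (r i)}).ncard ≤ k) (i : Fin n) (J : Finset (Fin n))
    (hJ : ∀ j ∈ J, r i ≤ r j ∧ (closedBall (a i) (r i) ∩ closedBall (a j) (r j)).Nonempty) :
    J.card ≤ 9 * k := by
  have hc : ∀ j, ∃ c, j ∈ J → closedBall c (r i) ⊆ closedBall (a i) (3 * r i) ∧
      closedBall c (r i) ⊆ closedBall (a j) (r j) := by
    intro j
    by_cases hj : j ∈ J
    · obtain ⟨c, hc⟩ := exists_shrunk_ball (hr i) (hJ j hj).1 (hJ j hj).2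
      exact ⟨c, fun _ => hc⟩
    · exact ⟨0, fun h => absurd h hj⟩
  choose c hc using hc
  refine card_le_of_multiplicity volume J (fun j => closedBall (c j) (r i))
    (closedBall (a i) (3 * r i)) (volume (closedBall (a i) (r i))) 9 k
    (fun _ _ => measurableSet_closedBall) measurableSet_closedBall
    (measure_closedBall_pos _ _ (hr i)).ne' measure_closedBall_lt_top.ne
    (fun j _ => ?_) (fun j hj => (hc j hj).1) ?_ fun x => ?_
  · rw [Measure.addHaar_closedBall_center, Measure.addHaar_closedBall_center _ (a i)]
  · have hri := (hr i).le
    rw [Measure.addHaar_closedBall _ _ (by positivity), Measure.addHaar_closedBall _ _ hri,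
      finrank_euclideanSpace_fin, mul_pow, ENNReal.ofReal_mul (by positivity), mul_assoc]
    gcongr
    norm_num
  · exact (Set.ncard_le_ncard fun j hj => (hc j hj.1).2 hj.2).trans (hply x)

theorem stmt10 (n k : ℕ) (a : Fin n → EuclideanSpace ℝ (Fin 2)) (r : Fin n → ℝ)
    (hr : ∀ i, 0 < r i)
    (hply : ∀ x : EuclideanSpace ℝ (Fin 2),
      ({i : Fin n | x ∈ closedBall (a i) (r i)}).ncard ≤ k) :
    ({q : Sym2 (Fin n) | ∃ i j : Fin n, q = s(i, j) ∧ i ≠ j ∧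
        (closedBall (a i) (r i) ∩ closedBall (a j) (r j)).Nonempty}).ncard
      ≤ 9 * k * n := by
  classical
  let N : Fin n → Finset (Fin n) := fun i => Finset.univ.filter fun j =>
    r i ≤ r j ∧ (closedBall (a i) (r i) ∩ closedBall (a j) (r j)).Nonempty
  let T : Finset (Sym2 (Fin n)) := Finset.univ.biUnion fun i => (N i).image fun j => s(i, j)
  have hT : T.card ≤ 9 * k * n := by
    refine (Finset.card_biUnion_le_card_mul _ _ (9 * k) fun i _ => ?_).trans (by simp [mul_comm])
    exact Finset.card_image_le.trans
      (card_larger_neighbours_le a r hr hply i (N i) fun j hj => by simpa [N] using hj)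
  refine le_trans ?_ hT
  rw [← Set.ncard_coe_finset]
  refine Set.ncard_le_ncard ?_ T.finite_toSet
  rintro q ⟨i, j, rfl, -, h⟩
  simp only [T, N, Finset.coe_biUnion, Finset.coe_image, Set.mem_iUnion, Set.mem_image,
    Finset.mem_coe, Finset.mem_filter, Finset.mem_univ, true_and]
  rcases le_total (r i) (r j) with hij | hij
  · exact ⟨i, trivial, j, ⟨hij, h⟩, rfl⟩
  · exact ⟨j, trivial, i, ⟨hij, Set.inter_comm _ _ ▸ h⟩, Sym2.eq_swap⟩
end

section
/- There exists a natural number K with the following property: for every s > 0 and every closed axis-parallel square σ = [a, a+s] × [b, b+s] in ℝ², there is a finite set Q ⊆ ℝ² with |Q| ≤ K such that every closed disk D of radius at least s/12 that intersects the topological boundary of σ contains at least one point of Q. -/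
/-!
Put `ρ = s / 12`. A disk of radius `r ≥ ρ` through a point `x` of the square contains a disk of radius
`ρ` whose center `z` lies within `ρ` of `x`: slide from `x` towards the center by the fraction
`ρ / r`. So `z` lies in the square enlarged by `ρ` on each side, and the grid of mesh
`s / 24` on the enlarged square has a point within `√2 · s / 24 ≤ ρ` of `z`. This grid has `29 ^ 2`
points whatever `s` is.
-/

/-- A disk of radius `r ≥ ρ` through `x` contains a disk of radius `ρ` centered within `ρ` of `x`. -/
lemma exists_small_closedBall {x c : EuclideanSpace ℝ (Fin 2)} {r ρ : ℝ} (hρ : 0 < ρ)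
    (hr : ρ ≤ r) (hx : dist x c ≤ r) :
    ∃ z, dist z x ≤ ρ ∧ Metric.closedBall z ρ ⊆ Metric.closedBall c r := by
  have hr0 : 0 < r := hρ.trans_le hr
  have h1 : ρ / r ≤ 1 := (div_le_one hr0).2 hr
  have h0 : 0 ≤ ρ / r := by positivity
  have e : ρ / r * r = ρ := div_mul_cancel₀ _ hr0.ne'
  refine ⟨AffineMap.lineMap x c (ρ / r), ?_, Metric.closedBall_subset_closedBall' ?_⟩
  · rw [dist_lineMap_left, Real.norm_of_nonneg h0]
    nlinarith
  · rw [dist_lineMap_right, Real.norm_of_nonneg (sub_nonneg.2 h1)]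
    nlinarith

/-- Rounding down to the grid `a + (s / 24) ℤ`, on the interval `[a, a + s]` enlarged by `s / 12`. -/
lemma exists_grid_coord {s a u v : ℝ} (hs : 0 < s) (hv : v ∈ Set.Icc a (a + s))
    (huv : |u - v| ≤ s / 12) :
    ∃ i ∈ Finset.Icc (-2 : ℤ) 26, |a + i * (s / 24) - u| ≤ s / 24 := by
  obtain ⟨h1, h2⟩ := abs_le.1 huv
  obtain ⟨h3, h4⟩ := hv
  have hh : 0 < s / 24 := by positivity
  have e : (u - a) / (s / 24) * (s / 24) = u - a := div_mul_cancel₀ _ hh.ne'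
  have hl := Int.floor_le ((u - a) / (s / 24))
  have hu := Int.lt_floor_add_one ((u - a) / (s / 24))
  refine ⟨⌊(u - a) / (s / 24)⌋, Finset.mem_Icc.2 ⟨Int.le_floor.2 ?_, Int.floor_le_iff.2 ?_⟩, ?_⟩
  · rw [le_div_iff₀ hh]
    push_cast
    linarith
  · rw [div_lt_iff₀ hh]
    push_cast
    linarith
  · rw [abs_le]
    constructor <;> nlinarith

theorem stmt11 :
    ∃ K : ℕ, ∀ s : ℝ, 0 < s → ∀ a b : ℝ,
      ∃ Q : Finset (EuclideanSpace ℝ (Fin 2)), Q.card ≤ K ∧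
        ∀ (c : EuclideanSpace ℝ (Fin 2)) (r : ℝ), s / 12 ≤ r →
          (Metric.closedBall c r ∩
              frontier {x : EuclideanSpace ℝ (Fin 2) |
                x 0 ∈ Set.Icc a (a + s) ∧ x 1 ∈ Set.Icc b (b + s)}).Nonempty →
          ∃ q ∈ Q, q ∈ Metric.closedBall c r := by
  classical
  refine ⟨(Finset.Icc (-2 : ℤ) 26 ×ˢ Finset.Icc (-2 : ℤ) 26).card, fun s hs a b =>
    ⟨(Finset.Icc (-2 : ℤ) 26 ×ˢ Finset.Icc (-2 : ℤ) 26).image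
      (fun p => !₂[a + p.1 * (s / 24), b + p.2 * (s / 24)]), Finset.card_image_le, ?_⟩⟩
  rintro c r hr ⟨x, hxc, hxf⟩
  have hclosed : IsClosed {x : EuclideanSpace ℝ (Fin 2) |
      x 0 ∈ Set.Icc a (a + s) ∧ x 1 ∈ Set.Icc b (b + s)} :=
    (isClosed_Icc.preimage (by fun_prop : Continuous fun x : EuclideanSpace ℝ (Fin 2) => x 0)).inter
      (isClosed_Icc.preimage (by fun_prop : Continuous fun x : EuclideanSpace ℝ (Fin 2) => x 1))
  obtain ⟨hx0, hx1⟩ := hclosed.frontier_subset hxf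
  obtain ⟨z, hzx, hz⟩ := exists_small_closedBall (by positivity) hr (Metric.mem_closedBall.1 hxc)
  have hcoord (k : Fin 2) : |z k - x k| ≤ s / 12 := by
    rw [dist_eq_norm] at hzx
    simpa using (PiLp.norm_apply_le (z - x) k).trans hzx
  obtain ⟨i, hi, hi'⟩ := exists_grid_coord hs hx0 (hcoord 0)
  obtain ⟨j, hj, hj'⟩ := exists_grid_coord hs hx1 (hcoord 1)
  refine ⟨_, Finset.mem_image_of_mem _ (Finset.mk_mem_product hi hj), hz ?_⟩
  rw [Metric.mem_closedBall, EuclideanSpace.dist_eq]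
  apply Real.sqrt_le_iff.2 ⟨by positivity, ?_⟩
  simp only [Fin.sum_univ_two, Real.dist_eq]
  have h0 := pow_le_pow_left₀ (abs_nonneg _) hi' 2
  have h1 := pow_le_pow_left₀ (abs_nonneg _) hj' 2
  simp only [Matrix.cons_val_zero, Matrix.cons_val_one]
  nlinarith [sq_nonneg s]
end

section
/- Let α satisfy 0 < α ≤ π/3 and let Δ be an α-fat triangle with vertices u, v, w. Then the vertex v admits a canonical chord: there exist a point q on the closed segment [u, w] (the edge of Δ opposite v), a real t > 0, and an integer i with 0 ≤ i ≤ ⌊4π/α⌋, such that q − v = t · (cos(i·α/2), sin(i·α/2)). -/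
/-!
The cone at `v` spanned by the edges towards `u` and `w` has opening angle `θ` with `α ≤ θ < π`,
while consecutive canonical directions differ by the angle `α / 2`. Hence some canonical direction
lies in this cone (`exists_index`), and a ray of the cone meets the edge `[u, w]`: if
`e φ`, `e (φ + θ)` are the unit vectors of the two edges and `0 ≤ δ ≤ θ`, then
`sin θ • e (φ + δ) = sin (θ - δ) • e φ + sin δ • e (φ + θ)` is a nonnegative combination, which
becomes a convex combination of `u - v` and `w - v` after rescaling (`exists_chord`). The bound
`θ < π` comes from the angle sum, and the orientation of the triangle is dealt with by exchanging
`u` and `w`.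
-/

/-- The `i`-th canonical direction: the unit vector making angle `i·α/2` with the
positive `x`-axis. -/
noncomputable def canonicalDir (α : ℝ) (i : ℤ) : EuclideanSpace ℝ (Fin 2) :=
  (EuclideanSpace.equiv (Fin 2) ℝ).symm
    ![Real.cos ((i : ℝ) * (α / 2)), Real.sin ((i : ℝ) * (α / 2))]

/-- The unit vector at angle `φ` from the positive `x`-axis. -/
noncomputable def unitDir (φ : ℝ) : EuclideanSpace ℝ (Fin 2) :=
  !₂[Real.cos φ, Real.sin φ]

lemma canonicalDir_eq_unitDir (α : ℝ) (i : ℤ) :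
    canonicalDir α i = unitDir ((i : ℝ) * (α / 2)) := rfl

lemma unitDir_congr {φ ψ : ℝ} (k : ℤ) (h : φ = ψ + k * (2 * Real.pi)) :
    unitDir φ = unitDir ψ := by
  subst h
  simp [unitDir, Real.cos_add_int_mul_two_pi, Real.sin_add_int_mul_two_pi]

/-- Polar coordinates with the angle normalised to `[0, 2π)`. -/
lemma exists_polar {a : EuclideanSpace ℝ (Fin 2)} (ha : a ≠ 0) :
    ∃ r φ : ℝ, 0 < r ∧ 0 ≤ φ ∧ φ < 2 * Real.pi ∧ a = r • unitDir φ := by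
  have hz : (⟨a 0, a 1⟩ : ℂ) ≠ 0 := by
    intro h
    apply ha
    ext j
    fin_cases j
    · exact congrArg Complex.re h
    · exact congrArg Complex.im h
  set z : ℂ := ⟨a 0, a 1⟩ with hzdef
  have hp := Real.two_pi_pos
  have hmem := toIcoMod_mem_Ico' hp z.arg
  refine ⟨‖z‖, toIcoMod hp 0 z.arg, norm_pos_iff.mpr hz, hmem.1, hmem.2, ?_⟩
  rw [unitDir_congr (φ := toIcoMod hp 0 z.arg) (ψ := z.arg) (-(toIcoDiv hp 0 z.arg))
    (by rw [toIcoMod]; simp [sub_eq_add_neg])]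
  ext j
  fin_cases j
  · simp [unitDir, Complex.norm_mul_cos_arg, hzdef]
  · simp [unitDir, Complex.norm_mul_sin_arg, hzdef]

lemma cos_angle_smul_unitDir {r s φ χ : ℝ} (hr : 0 < r) (hs : 0 < s) :
    Real.cos (InnerProductGeometry.angle (r • unitDir φ) (s • unitDir χ)) =
      Real.cos (χ - φ) := by
  have hn : ∀ x : ℝ, ‖unitDir x‖ = 1 := by
    intro x
    simp [unitDir, EuclideanSpace.norm_eq, Fin.sum_univ_two]
  rw [InnerProductGeometry.angle_smul_left_of_pos _ _ hr,
    InnerProductGeometry.angle_smul_right_of_pos _ _ hs, InnerProductGeometry.cos_angle,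
    hn, hn, Real.cos_sub]
  simp [unitDir, PiLp.inner_apply, Fin.sum_univ_two]

/-- Any half-open arc of length `α / 2` starting in `[0, 2π)` contains a canonical direction. -/
lemma exists_index {α φ : ℝ} (hα0 : 0 < α) (h0 : 0 ≤ φ) (hφ : φ < 2 * Real.pi) :
    ∃ (i : ℤ) (δ : ℝ), 0 ≤ i ∧ i ≤ ⌊4 * Real.pi / α⌋ ∧ 0 ≤ δ ∧ δ < α / 2 ∧
      canonicalDir α i = unitDir (φ + δ) := by
  have hα2 : 0 < α / 2 := by positivity
  have hle : φ ≤ ⌈φ / (α / 2)⌉ * (α / 2) := (div_le_iff₀ hα2).1 (Int.le_ceil _)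
  have hlt : ⌈φ / (α / 2)⌉ * (α / 2) < φ + α / 2 := by
    have := mul_lt_mul_of_pos_right (Int.ceil_lt_add_one (φ / (α / 2))) hα2
    rwa [add_mul, div_mul_cancel₀ _ hα2.ne', one_mul] at this
  by_cases hi : ⌈φ / (α / 2)⌉ ≤ ⌊4 * Real.pi / α⌋
  · refine ⟨⌈φ / (α / 2)⌉, ⌈φ / (α / 2)⌉ * (α / 2) - φ, Int.ceil_nonneg (by positivity), hi,
      by linarith, by linarith, ?_⟩
    rw [canonicalDir_eq_unitDir]
    congr 1
    ring
  · -- The first multiple of `α / 2` after `φ` lies beyond `2π`, so the arc contains the angle `2π`,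
    -- which is the direction of index `0`.
    have h2 : 2 * Real.pi < ⌈φ / (α / 2)⌉ * (α / 2) := by
      rw [not_le, Int.floor_lt, div_lt_iff₀ hα0] at hi
      linarith
    refine ⟨0, 2 * Real.pi - φ, le_rfl, Int.floor_nonneg.2 (by positivity), by linarith,
      by linarith, ?_⟩
    rw [canonicalDir_eq_unitDir]
    exact unitDir_congr (-1) (by push_cast; ring)

/-- The chord for a positively oriented pair of edges: `w - v` is at angle `θ` counterclockwise
from `u - v`. -/
lemma exists_chord {α r s φ θ : ℝ} {u v w : EuclideanSpace ℝ (Fin 2)} (hα0 : 0 < α)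
    (hr : 0 < r) (hs : 0 < s) (h0 : 0 ≤ φ) (hφ : φ < 2 * Real.pi) (hαθ : α ≤ θ)
    (hθ : θ < Real.pi) (hu : u - v = r • unitDir φ) (hw : w - v = s • unitDir (φ + θ)) :
    ∃ q ∈ segment ℝ u w, ∃ t : ℝ, 0 < t ∧ ∃ i : ℤ,
      0 ≤ i ∧ i ≤ ⌊4 * Real.pi / α⌋ ∧ q - v = t • canonicalDir α i := by
  obtain ⟨i, δ, hi0, hi1, hδ0, hδ1, hd⟩ := exists_index hα0 h0 hφ
  have hsθ : 0 < Real.sin θ := Real.sin_pos_of_pos_of_lt_pi (by linarith) hθ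
  have hc1 : 0 < s * Real.sin (θ - δ) :=
    mul_pos hs (Real.sin_pos_of_pos_of_lt_pi (by linarith) (by linarith))
  have hc2 : 0 ≤ r * Real.sin δ :=
    mul_nonneg hr.le (Real.sin_nonneg_of_nonneg_of_le_pi hδ0 (by linarith))
  set c1 := s * Real.sin (θ - δ) with hc1d
  set c2 := r * Real.sin δ with hc2d
  have hc : 0 < c1 + c2 := by linarith
  have key : c1 • (u - v) + c2 • (w - v) = (r * s * Real.sin θ) • unitDir (φ + δ) := by
    rw [hu, hw, hc1d, hc2d]
    ext j
    fin_cases j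
    · simp [unitDir, Real.cos_add, Real.sin_sub]
      ring
    · simp [unitDir, Real.sin_add, Real.sin_sub]
      ring
  refine ⟨(c1 / (c1 + c2)) • u + (c2 / (c1 + c2)) • w,
    ⟨c1 / (c1 + c2), c2 / (c1 + c2), by positivity, by positivity, by field_simp, rfl⟩,
    r * s * Real.sin θ / (c1 + c2), by positivity, i, hi0, hi1, ?_⟩
  rw [hd, div_eq_inv_mul (r * s * Real.sin θ), mul_smul, ← key]
  have hv : v = (c1 / (c1 + c2)) • v + (c2 / (c1 + c2)) • v := by
    rw [← add_smul, ← add_div, div_self hc.ne', one_smul]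
  conv_lhs => rw [hv]
  simp only [div_eq_inv_mul, mul_smul, smul_add, smul_sub]
  abel

theorem stmt15 (α : ℝ) (hα0 : 0 < α) (hα : α ≤ Real.pi / 3)
    (u v w : EuclideanSpace ℝ (Fin 2))
    (hind : AffineIndependent ℝ ![u, v, w])
    (h1 : α ≤ EuclideanGeometry.angle w u v)
    (h2 : α ≤ EuclideanGeometry.angle u v w)
    (h3 : α ≤ EuclideanGeometry.angle v w u) :
    ∃ q ∈ segment ℝ u w, ∃ t : ℝ, 0 < t ∧ ∃ i : ℤ,
      0 ≤ i ∧ i ≤ ⌊4 * Real.pi / α⌋ ∧ q - v = t • canonicalDir α i := by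
  have huv : u ≠ v := fun h => by
    simpa using hind.injective (a₁ := 0) (a₂ := 1) (by simpa using h)
  have hwv : w ≠ v := fun h => by
    simpa using hind.injective (a₁ := 2) (a₂ := 1) (by simpa using h)
  have hsum := EuclideanGeometry.angle_add_angle_add_angle_eq_pi w huv.symm
  have hθ : EuclideanGeometry.angle u v w < Real.pi := by linarith
  obtain ⟨r, φ, hr, hφ0, hφ1, hu⟩ := exists_polar (sub_ne_zero.2 huv)
  obtain ⟨s, χ, hs, hχ0, hχ1, hw⟩ := exists_polar (sub_ne_zero.2 hwv)
  have hcos : Real.cos (EuclideanGeometry.angle u v w) = Real.cos (χ - φ) := by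
    rw [EuclideanGeometry.angle, vsub_eq_sub, vsub_eq_sub, hu, hw, cos_angle_smul_unitDir hr hs]
  obtain ⟨k, hk | hk⟩ := Real.cos_eq_cos_iff.1 hcos
  · refine exists_chord hα0 hr hs hφ0 hφ1 h2 hθ hu ?_
    exact hw.trans (congrArg (s • ·) (unitDir_congr k (by linarith)))
  · rw [segment_symm]
    refine exists_chord hα0 hs hr hχ0 hχ1 h2 hθ hw ?_
    exact hu.trans (congrArg (r • ·) (unitDir_congr (-k) (by push_cast; linarith)))
end

section
/- Let α satisfy 0 < α ≤ π/3, and let Δ and Δ' be α-fat triangles in ℝ². For each vertex v of Δ fix a canonical chord s_v of Δ at v, and for each vertex v' of Δ' fix a canonical chord s'_{v'} of Δ' at v'; let S(Δ) and S(Δ') be the resulting sets of three chords, and let P(Δ) be the set consisting of the three vertices of Δ together with the endpoints of the chords in S(Δ). If Δ ∩ Δ' ≠ ∅, then at least one of the following holds: (i) some vertex of Δ' lies in Δ; (ii) some point of P(Δ) lies in Δ'; (iii) some chord in S(Δ) intersects some chord in S(Δ'). -/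
/-- `q` is the foot of a canonical chord of a triangle at the vertex `v`, where the
edge opposite to `v` is the segment `[a, b]`: it lies on that edge and `q - v` is a
positive multiple of a canonical direction. The chord itself is `[v, q]`. -/
noncomputable def IsChordFoot (α : ℝ) (v a b q : EuclideanSpace ℝ (Fin 2)) : Prop :=
  q ∈ segment ℝ a b ∧ ∃ t : ℝ, 0 < t ∧ ∃ i : ℤ,
    0 ≤ i ∧ i ≤ ⌊4 * Real.pi / α⌋ ∧ q - v = t • canonicalDir α i

/-- The Euclidean plane. -/
local notation "Plane" => EuclideanSpace ℝ (Fin 2)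

/-- Barycentric coordinates of a triangle, with the triangle described by their signs. -/
lemma exists_barycentric {u v w : Plane} (hind : AffineIndependent ℝ ![u, v, w]) :
    ∃ a b c : Plane →ᵃ[ℝ] ℝ, (∀ x, a x + b x + c x = 1) ∧
      (∀ x, x = a x • u + b x • v + c x • w) ∧
      ∀ x, x ∈ convexHull ℝ ({u, v, w} : Set Plane) ↔ 0 ≤ a x ∧ 0 ≤ b x ∧ 0 ≤ c x := by
  have hspan : affineSpan ℝ (Set.range ![u, v, w]) = ⊤ := by
    rw [hind.affineSpan_eq_top_iff_card_eq_finrank_add_one]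
    simp
  let B : AffineBasis (Fin 3) ℝ Plane := ⟨![u, v, w], hind, hspan⟩
  have hB0 : B 0 = u := rfl
  have hB1 : B 1 = v := rfl
  have hB2 : B 2 = w := rfl
  refine ⟨B.coord 0, B.coord 1, B.coord 2, fun x => ?_, fun x => ?_, fun x => ?_⟩
  · rw [← B.sum_coord_apply_eq_one x, Fin.sum_univ_three]
  · have h := B.linear_combination_coord_eq_self x
    rw [Fin.sum_univ_three, hB0, hB1, hB2] at h
    exact h.symm
  · have hr : Set.range B = {u, v, w} := by
      have : (B : Fin 3 → Plane) = ![u, v, w] := rfl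
      rw [this, Matrix.range_cons, Matrix.range_cons, Matrix.range_cons, Matrix.range_empty]
      ext; simp; tauto
    rw [← hr, B.convexHull_eq_nonneg_coord]
    simp [Fin.forall_fin_succ]

lemma exists_vertex_nonneg {u v w p : Plane} (f : Plane →ᵃ[ℝ] ℝ)
    (hp : p ∈ convexHull ℝ ({u, v, w} : Set Plane)) (h : 0 ≤ f p) :
    0 ≤ f u ∨ 0 ≤ f v ∨ 0 ≤ f w := by
  by_contra! hc
  have hconv : Convex ℝ (f ⁻¹' Set.Iio 0) := (convex_Iio 0).affine_preimage f
  have hsub : ({u, v, w} : Set Plane) ⊆ f ⁻¹' Set.Iio 0 := by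
    rintro x (rfl | rfl | rfl)
    exacts [hc.1, hc.2.1, hc.2.2]
  exact absurd (convexHull_min hsub hconv hp) (not_lt.2 h)

/-- A convex set `K` meeting the triangle `T = {a, b, c ≥ 0}` and containing a point `z ∉ T` with
`0 ≤ b z` meets one of the edges `a = 0` and `c = 0` of `T`. -/
lemma exists_mem_edge_aux {K : Set Plane} (hK : Convex ℝ K) (a b c : Plane →ᵃ[ℝ] ℝ) {p z : Plane}
    (hpK : p ∈ K) (hzK : z ∈ K) (ha : 0 ≤ a p) (hb : 0 ≤ b p) (hc : 0 ≤ c p) (hbz : 0 ≤ b z)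
    (hz : ¬ (0 ≤ a z ∧ 0 ≤ b z ∧ 0 ≤ c z)) :
    ∃ x ∈ K, 0 ≤ a x ∧ 0 ≤ b x ∧ 0 ≤ c x ∧ (a x = 0 ∨ c x = 0) := by
  -- The minimum of `a` and `c` changes sign along the segment `[p, z]`.
  have hcont : ContinuousOn (fun t : ℝ => min (a (AffineMap.lineMap p z t))
      (c (AffineMap.lineMap p z t))) (Set.Icc 0 1) := by
    have h1 := a.continuous_of_finiteDimensional
    have h2 := c.continuous_of_finiteDimensional
    have h3 : Continuous (fun t : ℝ => AffineMap.lineMap p z t) := AffineMap.lineMap_continuous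
    exact ((h1.comp h3).min (h2.comp h3)).continuousOn
  have h0 : (0 : ℝ) ∈ Set.Icc (min (a z) (c z)) (min (a p) (c p)) := by
    refine ⟨?_, le_min ha hc⟩
    by_contra! h
    exact hz ⟨(lt_min_iff.1 h).1.le, hbz, (lt_min_iff.1 h).2.le⟩
  obtain ⟨t, ht, hmin⟩ := intermediate_value_Icc' zero_le_one hcont (by simpa using h0)
  refine ⟨AffineMap.lineMap p z t, hK.lineMap_mem hpK hzK ht, ?_, ?_, ?_, ?_⟩
  · exact hmin ▸ min_le_left _ _
  · rw [AffineMap.apply_lineMap]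
    exact (convex_Ici (0 : ℝ)).lineMap_mem hb hbz ht
  · exact hmin ▸ min_le_right _ _
  · rcases min_choice (a (AffineMap.lineMap p z t)) (c (AffineMap.lineMap p z t)) with h | h
    · exact Or.inl (h ▸ hmin)
    · exact Or.inr (h ▸ hmin)

/-- A triangle that meets `T` and has no vertex in `T` meets one of the two edges of `T` at `v`. -/
lemma exists_mem_edge {T : Set Plane} {u v w u' v' w' p : Plane} (a b c : Plane →ᵃ[ℝ] ℝ)
    (hsum : ∀ x, a x + b x + c x = 1) (hcomb : ∀ x, x = a x • u + b x • v + c x • w)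
    (hT : ∀ x, x ∈ T ↔ 0 ≤ a x ∧ 0 ≤ b x ∧ 0 ≤ c x)
    (hpT : p ∈ T) (hp : p ∈ convexHull ℝ ({u', v', w'} : Set Plane))
    (hu' : u' ∉ T) (hv' : v' ∉ T) (hw' : w' ∉ T) :
    ∃ x ∈ convexHull ℝ ({u', v', w'} : Set Plane), x ∈ segment ℝ v u ∨ x ∈ segment ℝ v w := by
  obtain ⟨ha, hb, hc⟩ := (hT p).1 hpT
  have hvert : ∃ z ∈ ({u', v', w'} : Set Plane), z ∉ T ∧ 0 ≤ b z := by
    rcases exists_vertex_nonneg b hp hb with h | h | h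
    · exact ⟨u', by simp, hu', h⟩
    · exact ⟨v', by simp, hv', h⟩
    · exact ⟨w', by simp, hw', h⟩
  obtain ⟨z, hz, hzT, hbz⟩ := hvert
  obtain ⟨x, hx, hax, hbx, hcx, h⟩ := exists_mem_edge_aux (convex_convexHull ℝ _) a b c hp
    (subset_convexHull ℝ _ hz) ha hb hc hbz (fun h => hzT ((hT z).2 h))
  refine ⟨x, hx, ?_⟩
  have hs := hsum x
  have hx' := hcomb x
  rcases h with h | h
  · right
    refine ⟨b x, c x, hbx, hcx, by linarith, ?_⟩
    rw [h, zero_smul, zero_add] at hx'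
    exact hx'.symm
  · left
    refine ⟨b x, a x, hbx, hax, by linarith, ?_⟩
    rw [h, zero_smul, add_zero, add_comm] at hx'
    exact hx'.symm

/-- A convex set containing points of both edges `[v, u]` and `[v, w]` meets every chord `[v, q]`
with `q` on `[u, w]`. -/
lemma chord_meets {K : Set Plane} (hK : Convex ℝ K) {u v w q x y : Plane} (hxK : x ∈ K)
    (hyK : y ∈ K) (hx : x ∈ segment ℝ v u) (hy : y ∈ segment ℝ v w) (hq : q ∈ segment ℝ u w) :
    ∃ r ∈ K, r ∈ segment ℝ v q := by
  obtain ⟨l', l, hl', hl, hll, rfl⟩ := hx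
  obtain ⟨m', m, hm', hm, hmm, rfl⟩ := hy
  obtain ⟨s, t, hs, ht, hst, rfl⟩ := hq
  obtain rfl : l' = 1 - l := by linarith
  obtain rfl : m' = 1 - m := by linarith
  obtain rfl : s = 1 - t := by linarith
  rcases hl.eq_or_lt with rfl | hl0
  · refine ⟨v, ?_, left_mem_segment ℝ _ _⟩
    simpa using hxK
  rcases hm.eq_or_lt with rfl | hm0
  · refine ⟨v, ?_, left_mem_segment ℝ _ _⟩
    simpa using hyK
  have hD : 0 < m * (1 - t) + l * t := by
    rcases ht.eq_or_lt with rfl | ht0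
    · simpa using hm0
    · have := mul_pos hl0 ht0
      have := mul_nonneg hm hs
      linarith
  set D := m * (1 - t) + l * t with hDdef
  -- In the basis `u - v`, `w - v` the lines `xy` and `vq` meet at `(l m (1 - t), l m t) / D`.
  have hle : l * m / D ≤ 1 := by
    rw [div_le_one hD]
    nlinarith [mul_nonneg (mul_nonneg hm hs) (sub_nonneg.2 (by linarith : l ≤ 1)),
      mul_nonneg (mul_nonneg hl ht) (sub_nonneg.2 (by linarith : m ≤ 1))]
  refine ⟨_, hK hxK hyK (a := m * (1 - t) / D) (b := l * t / D) (by positivity) (by positivity)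
    (by field_simp; rw [hDdef]; ring), ?_⟩
  refine ⟨1 - l * m / D, l * m / D, by linarith, by positivity, by ring, ?_⟩
  have hD' : m * (1 - t) / D + l * t / D = 1 := by
    field_simp
    rw [hDdef]; ring
  have e : (m * (1 - t) / D) * (1 - l) + (l * t / D) * (1 - m) = 1 - l * m / D := by
    linear_combination hD'
  rw [← e]
  module

/-- An affine function that weakly separates `a` from `b` and `c` vanishes somewhere on `[a, q]`
for `q` on `[b, c]`. -/
lemma exists_zero_on_chord {a b c q : Plane} (f : Plane →ᵃ[ℝ] ℝ) (hq : q ∈ segment ℝ b c)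
    (ha : 0 ≤ f a) (hb : f b ≤ 0) (hc : f c ≤ 0) : ∃ x ∈ segment ℝ a q, f x = 0 := by
  have hconv : Convex ℝ (f ⁻¹' Set.Iic 0) := (convex_Iic 0).affine_preimage f
  have hfq : f q ≤ 0 := hconv.segment_subset hb hc hq
  have h : (0 : ℝ) ∈ segment ℝ (f a) (f q) := by
    rw [segment_symm, segment_eq_Icc (hfq.trans ha)]
    exact ⟨hfq, ha⟩
  rw [← image_segment ℝ f] at h
  exact h

/-- If `v`, `q` lie outside a convex set `K` that meets `[v, q]`, then `K` meets the line through
`v` and `q` only inside `[v, q]`. -/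
lemma mem_segment_of_collinear {K : Set Plane} (hK : Convex ℝ K) {v q r : Plane} {t : ℝ}
    (hv : v ∉ K) (hq : q ∉ K) (hr : r ∈ K) (hrs : r ∈ segment ℝ v q)
    (hx : v + t • (q - v) ∈ K) : v + t • (q - v) ∈ segment ℝ v q := by
  obtain ⟨s', s, hs', hs, hss, rfl⟩ := hrs
  obtain rfl : s' = 1 - s := by linarith
  have h0 : 0 ≤ t := by
    by_contra! h
    have hd : 0 < s - t := by linarith
    refine hv ?_
    have key := hK hx hr (a := s / (s - t)) (b := -t / (s - t)) (by positivity)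
      (div_nonneg (by linarith) hd.le) (by field_simp; ring)
    convert key using 1
    have e : s / (s - t) + -t / (s - t) = 1 := by field_simp; ring
    have e2 : s / (s - t) * t + -t / (s - t) * s = 0 := by ring
    linear_combination (norm := module) (-e) • v - e2 • (q - v)
  have h1 : t ≤ 1 := by
    by_contra! h
    have hd : 0 < t - s := by linarith
    refine hq ?_
    have key := hK hr hx (a := (t - 1) / (t - s)) (b := (1 - s) / (t - s))
      (div_nonneg (by linarith) hd.le) (by positivity) (by field_simp; ring)
    convert key using 1
    have e : (t - 1) / (t - s) + (1 - s) / (t - s) = 1 := by field_simp; ring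
    have e2 : (t - 1) / (t - s) * s + (1 - s) / (t - s) * t = 1 := by field_simp; ring
    linear_combination (norm := module) (-e) • v - e2 • (q - v)
  exact ⟨1 - t, t, by linarith, h0, by ring, by module⟩

/-- An affine function whose zero set is the line through two distinct points. -/
lemma exists_line_function {v q : Plane} (h : v ≠ q) :
    ∃ f : Plane →ᵃ[ℝ] ℝ, (∀ x ∈ segment ℝ v q, f x = 0) ∧
      ∀ x, f x = 0 → ∃ t : ℝ, x = v + t • (q - v) := by
  let g : Plane →ₗ[ℝ] ℝ :=
    (q 0 - v 0) • (EuclideanSpace.proj (1 : Fin 2) : Plane →L[ℝ] ℝ).toLinearMap -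
      (q 1 - v 1) • (EuclideanSpace.proj (0 : Fin 2) : Plane →L[ℝ] ℝ).toLinearMap
  have hg : ∀ x, g x = (q 0 - v 0) * x 1 - (q 1 - v 1) * x 0 := fun x => rfl
  let f : Plane →ᵃ[ℝ] ℝ := g.toAffineMap - AffineMap.const ℝ Plane (g v)
  have hf : ∀ x, f x = (q 0 - v 0) * (x 1 - v 1) - (q 1 - v 1) * (x 0 - v 0) := by
    intro x
    have : f x = g x - g v := rfl
    rw [this, hg, hg]
    ring
  refine ⟨f, ?_, ?_⟩
  · rintro x ⟨a, b, -, -, hab, rfl⟩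
    obtain rfl : a = 1 - b := by linarith
    rw [hf]
    simp only [PiLp.add_apply, PiLp.smul_apply, smul_eq_mul]
    ring
  · intro x hx
    rw [hf] at hx
    by_cases h0 : q 0 - v 0 = 0
    · have h1 : q 1 - v 1 ≠ 0 := by
        intro h1
        apply h
        ext i
        fin_cases i
        · exact (sub_eq_zero.1 h0).symm
        · exact (sub_eq_zero.1 h1).symm
      refine ⟨(x 1 - v 1) / (q 1 - v 1), ?_⟩
      ext i
      fin_cases i <;> simp <;> field_simp <;> linarith
    · refine ⟨(x 0 - v 0) / (q 0 - v 0), ?_⟩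
      ext i
      fin_cases i <;> simp <;> field_simp <;> linarith

/-- A segment that meets a triangle and has both endpoints outside it meets one of any three chords
of the triangle from the respective vertices. -/
lemma chords_meet {v q u' v' w' qu' qv' qw' r : Plane}
    (hqu' : qu' ∈ segment ℝ v' w') (hqv' : qv' ∈ segment ℝ u' w')
    (hqw' : qw' ∈ segment ℝ u' v')
    (hv : v ∉ convexHull ℝ ({u', v', w'} : Set Plane))
    (hq : q ∉ convexHull ℝ ({u', v', w'} : Set Plane))
    (hr : r ∈ convexHull ℝ ({u', v', w'} : Set Plane)) (hrs : r ∈ segment ℝ v q) :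
    ∃ s₂ ∈ ({segment ℝ u' qu', segment ℝ v' qv', segment ℝ w' qw'} : Set (Set Plane)),
      (segment ℝ v q ∩ s₂).Nonempty := by
  have hK := convex_convexHull ℝ ({u', v', w'} : Set Plane)
  have hu'K : u' ∈ convexHull ℝ ({u', v', w'} : Set Plane) := subset_convexHull ℝ _ (by simp)
  have hv'K : v' ∈ convexHull ℝ ({u', v', w'} : Set Plane) := subset_convexHull ℝ _ (by simp)
  have hw'K : w' ∈ convexHull ℝ ({u', v', w'} : Set Plane) := subset_convexHull ℝ _ (by simp)
  have hne : v ≠ q := by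
    rintro rfl
    rw [segment_same] at hrs
    exact hv (hrs ▸ hr)
  obtain ⟨f, hf0, hf⟩ := exists_line_function hne
  have hneg : ∀ x, (-f) x = -(f x) := fun x => rfl
  have hpos := exists_vertex_nonneg f hr (hf0 r hrs).ge
  have hnon := exists_vertex_nonneg (-f) hr (by rw [hneg, hf0 r hrs, neg_zero])
  simp only [hneg, neg_nonneg] at hnon
  -- It suffices that the line meets one of the three chords.
  suffices hz : ∃ s₂ ∈ ({segment ℝ u' qu', segment ℝ v' qv', segment ℝ w' qw'} :
      Set (Set Plane)), s₂ ⊆ convexHull ℝ ({u', v', w'} : Set Plane) ∧ ∃ x ∈ s₂, f x = 0 by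
    obtain ⟨s₂, hs₂, hsub, x, hx, hfx⟩ := hz
    obtain ⟨t, rfl⟩ := hf x hfx
    exact ⟨s₂, hs₂, _, mem_segment_of_collinear hK hv hq hr hrs (hsub hx), hx⟩
  have chord : ∀ {a b c p : Plane}, p ∈ segment ℝ b c →
      (0 ≤ f a ∧ f b ≤ 0 ∧ f c ≤ 0 ∨ f a ≤ 0 ∧ 0 ≤ f b ∧ 0 ≤ f c) →
      ∃ x ∈ segment ℝ a p, f x = 0 := by
    rintro a b c p hp (⟨h1, h2, h3⟩ | ⟨h1, h2, h3⟩)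
    · exact exists_zero_on_chord f hp h1 h2 h3
    · obtain ⟨x, hx, h⟩ := exists_zero_on_chord (a := a) (-f) hp (by rw [hneg]; linarith)
        (by rw [hneg]; linarith) (by rw [hneg]; linarith)
      exact ⟨x, hx, neg_eq_zero.1 h⟩
  have hsu := hK.segment_subset hu'K (hK.segment_subset hv'K hw'K hqu')
  have hsv := hK.segment_subset hv'K (hK.segment_subset hu'K hw'K hqv')
  have hsw := hK.segment_subset hw'K (hK.segment_subset hu'K hv'K hqw')
  have hcases : (0 ≤ f u' ∧ f v' ≤ 0 ∧ f w' ≤ 0 ∨ f u' ≤ 0 ∧ 0 ≤ f v' ∧ 0 ≤ f w') ∨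
      (0 ≤ f v' ∧ f u' ≤ 0 ∧ f w' ≤ 0 ∨ f v' ≤ 0 ∧ 0 ≤ f u' ∧ 0 ≤ f w') ∨
      (0 ≤ f w' ∧ f u' ≤ 0 ∧ f v' ≤ 0 ∨ f w' ≤ 0 ∧ 0 ≤ f u' ∧ 0 ≤ f v') := by
    clear hf0 hf hneg chord
    rcases le_total 0 (f u') with h1 | h1 <;> rcases le_total 0 (f v') with h2 | h2 <;>
      rcases le_total 0 (f w') with h3 | h3 <;> simp only [h1, h2, h3, true_and, and_true,
        true_or, or_true] at hpos hnon ⊢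
    · rcases hnon with h | h | h <;> simp [h]
    · rcases hpos with h | h | h <;> simp [h]
  rcases hcases with h | h | h
  · exact ⟨_, by simp, hsu, chord hqu' h⟩
  · exact ⟨_, by simp, hsv, chord hqv' h⟩
  · exact ⟨_, by simp, hsw, chord hqw' h⟩

theorem stmt16 (α : ℝ) (hα0 : 0 < α) (hα : α ≤ Real.pi / 3)
    (u v w u' v' w' : EuclideanSpace ℝ (Fin 2))
    (hind : AffineIndependent ℝ ![u, v, w])
    (h1 : α ≤ EuclideanGeometry.angle w u v)
    (h2 : α ≤ EuclideanGeometry.angle u v w)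
    (h3 : α ≤ EuclideanGeometry.angle v w u)
    (hind' : AffineIndependent ℝ ![u', v', w'])
    (h1' : α ≤ EuclideanGeometry.angle w' u' v')
    (h2' : α ≤ EuclideanGeometry.angle u' v' w')
    (h3' : α ≤ EuclideanGeometry.angle v' w' u')
    (qu qv qw qu' qv' qw' : EuclideanSpace ℝ (Fin 2))
    (hqu : IsChordFoot α u v w qu) (hqv : IsChordFoot α v u w qv)
    (hqw : IsChordFoot α w u v qw)
    (hqu' : IsChordFoot α u' v' w' qu') (hqv' : IsChordFoot α v' u' w' qv')
    (hqw' : IsChordFoot α w' u' v' qw')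
    (hmeet : ((convexHull ℝ {u, v, w} : Set (EuclideanSpace ℝ (Fin 2))) ∩
        convexHull ℝ {u', v', w'}).Nonempty) :
    (u' ∈ (convexHull ℝ {u, v, w} : Set (EuclideanSpace ℝ (Fin 2))) ∨
      v' ∈ (convexHull ℝ {u, v, w} : Set (EuclideanSpace ℝ (Fin 2))) ∨
      w' ∈ (convexHull ℝ {u, v, w} : Set (EuclideanSpace ℝ (Fin 2)))) ∨
    (∃ x ∈ ({u, v, w, qu, qv, qw} : Set (EuclideanSpace ℝ (Fin 2))),
      x ∈ (convexHull ℝ {u', v', w'} : Set (EuclideanSpace ℝ (Fin 2)))) ∨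
    (∃ s₁ ∈ ({segment ℝ u qu, segment ℝ v qv, segment ℝ w qw} :
        Set (Set (EuclideanSpace ℝ (Fin 2)))),
      ∃ s₂ ∈ ({segment ℝ u' qu', segment ℝ v' qv', segment ℝ w' qw'} :
        Set (Set (EuclideanSpace ℝ (Fin 2)))),
      (s₁ ∩ s₂).Nonempty) := by
  by_cases hA : u' ∈ convexHull ℝ ({u, v, w} : Set Plane) ∨
      v' ∈ convexHull ℝ ({u, v, w} : Set Plane) ∨ w' ∈ convexHull ℝ ({u, v, w} : Set Plane)
  · exact Or.inl hA
  right
  by_cases hB : ∃ x ∈ ({u, v, w, qu, qv, qw} : Set Plane),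
      x ∈ convexHull ℝ ({u', v', w'} : Set Plane)
  · exact Or.inl hB
  right
  push Not at hA hB
  obtain ⟨hu', hv', hw'⟩ := hA
  obtain ⟨p, hpT, hp⟩ := hmeet
  obtain ⟨a, b, c, hsum, hcomb, hT⟩ := exists_barycentric hind
  have hK := convex_convexHull ℝ ({u', v', w'} : Set Plane)
  -- At each vertex of `Δ`, one of the two edges there meets `Δ'`.
  have eu := exists_mem_edge (u := v) (v := u) (w := w) b a c (fun x => by linarith [hsum x])
    (fun x => (hcomb x).trans (by module)) (fun x => (hT x).trans (by tauto)) hpT hp hu' hv' hw'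
  have ev := exists_mem_edge (u := u) (v := v) (w := w) a b c hsum hcomb hT hpT hp hu' hv' hw'
  have ew := exists_mem_edge (u := u) (v := w) (w := v) a c b (fun x => by linarith [hsum x])
    (fun x => (hcomb x).trans (by module)) (fun x => (hT x).trans (by tauto)) hpT hp hu' hv' hw'
  have finish : ∀ {z q : Plane}, z ∈ ({u, v, w, qu, qv, qw} : Set Plane) →
      q ∈ ({u, v, w, qu, qv, qw} : Set Plane) →
      segment ℝ z q ∈ ({segment ℝ u qu, segment ℝ v qv, segment ℝ w qw} : Set (Set Plane)) →
      (∃ r ∈ convexHull ℝ ({u', v', w'} : Set Plane), r ∈ segment ℝ z q) →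
      ∃ s₁ ∈ ({segment ℝ u qu, segment ℝ v qv, segment ℝ w qw} : Set (Set Plane)),
        ∃ s₂ ∈ ({segment ℝ u' qu', segment ℝ v' qv', segment ℝ w' qw'} : Set (Set Plane)),
          (s₁ ∩ s₂).Nonempty := by
    rintro z q hz hq hs ⟨r, hr, hrs⟩
    exact ⟨_, hs, chords_meet hqu'.1 hqv'.1 hqw'.1 (hB z hz) (hB q hq) hr hrs⟩
  have atU : ∀ {x y : Plane}, x ∈ convexHull ℝ ({u', v', w'} : Set Plane) →
      y ∈ convexHull ℝ ({u', v', w'} : Set Plane) → x ∈ segment ℝ u v → y ∈ segment ℝ u w → _ :=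
    fun hx hy hxs hys => finish (z := u) (q := qu) (by simp) (by simp) (by simp)
      (chord_meets hK hx hy hxs hys hqu.1)
  have atV : ∀ {x y : Plane}, x ∈ convexHull ℝ ({u', v', w'} : Set Plane) →
      y ∈ convexHull ℝ ({u', v', w'} : Set Plane) → x ∈ segment ℝ v u → y ∈ segment ℝ v w → _ :=
    fun hx hy hxs hys => finish (z := v) (q := qv) (by simp) (by simp) (by simp)
      (chord_meets hK hx hy hxs hys hqv.1)
  have atW : ∀ {x y : Plane}, x ∈ convexHull ℝ ({u', v', w'} : Set Plane) →
      y ∈ convexHull ℝ ({u', v', w'} : Set Plane) → x ∈ segment ℝ w u → y ∈ segment ℝ w v → _ :=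
    fun hx hy hxs hys => finish (z := w) (q := qw) (by simp) (by simp) (by simp)
      (chord_meets hK hx hy hxs hys hqw.1)
  obtain ⟨x, hx, hxs⟩ := eu
  obtain ⟨y, hy, hys⟩ := ev
  obtain ⟨z, hz, hzs⟩ := ew
  rw [segment_symm ℝ v u] at hys atV
  rw [segment_symm ℝ w u, segment_symm ℝ w v] at hzs atW
  rcases hxs with hxs | hxs
  · rcases hzs with hzs | hzs
    · exact atU hx hz hxs hzs
    · exact atV hx hz hxs hzs
  · rcases hys with hys | hys
    · exact atU hy hx hys hxs
    · exact atW hx hy hxs hys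
end

section
/- Let α satisfy 0 < α ≤ π/3 and let Δ be an α-fat triangle in ℝ². Then there exist at most four triangles T₁, …, T_k (k ≤ 4), each the convex hull of three affinely independent points, such that the interiors of the T_m are pairwise disjoint, the union T₁ ∪ … ∪ T_k equals Δ, and each T_m is semi-canonical, i.e. at least two of the three edges of T_m are parallel to canonical directions. -/
/-- The edge with endpoints `a` and `b` is parallel to a canonical direction. -/
def EdgeCanonical (α : ℝ) (a b : EuclideanSpace ℝ (Fin 2)) : Prop :=
  ∃ t : ℝ, t ≠ 0 ∧ ∃ i : ℤ, 0 ≤ i ∧ i ≤ ⌊4 * Real.pi / α⌋ ∧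
    b - a = t • canonicalDir α i

/-- The Euclidean plane. -/
abbrev Plane := EuclideanSpace ℝ (Fin 2)

/-- Twice the signed area of the triangle `u v w`. -/
def area (u v w : Plane) : ℝ :=
  (v 0 - u 0) * (w 1 - u 1) - (v 1 - u 1) * (w 0 - u 0)

theorem affineIndependent_iff_area (u v w : Plane) :
    AffineIndependent ℝ ![u, v, w] ↔ area u v w ≠ 0 := by
  rw [affineIndependent_iff_linearIndependent_vsub ℝ _ (0 : Fin 3),
    ← linearIndependent_equiv (finSuccAboveEquiv (0 : Fin 3))]
  have hfun : ((fun i : {x : Fin 3 // x ≠ 0} => (![u, v, w] i -ᵥ ![u, v, w] 0 : Plane)) ∘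
      (finSuccAboveEquiv (0 : Fin 3))) = ![v - u, w - u] := by
    funext i
    fin_cases i <;> simp [finSuccAboveEquiv_apply]
  rw [hfun, LinearIndependent.pair_iff]
  unfold area
  constructor
  · intro h h0
    have e1 := h (w 0 - u 0) (-(v 0 - u 0)) (by
      ext i; fin_cases i <;> simp <;> linarith)
    have e2 := h (w 1 - u 1) (-(v 1 - u 1)) (by
      ext i; fin_cases i <;> simp <;> linarith)
    have e3 := h 1 0 (by
      ext i; fin_cases i <;> simp <;> linarith [e1.2, e2.2])
    exact one_ne_zero e3.1
  · intro h s t hst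
    have c0 : s * (v 0 - u 0) + t * (w 0 - u 0) = 0 := by
      simpa using congrArg (fun x : Plane => x 0) hst
    have c1 : s * (v 1 - u 1) + t * (w 1 - u 1) = 0 := by
      simpa using congrArg (fun x : Plane => x 1) hst
    constructor
    · refine (mul_eq_zero.1 (?_ : s * _ = 0)).resolve_right h
      linear_combination (w 1 - u 1) * c0 - (w 0 - u 0) * c1
    · refine (mul_eq_zero.1 (?_ : t * _ = 0)).resolve_right h
      linear_combination (v 0 - u 0) * c1 - (v 1 - u 1) * c0

/-- `p` lies strictly between `v` and `w`. -/
def Between (v p w : Plane) : Prop :=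
  ∃ s : ℝ, 0 < s ∧ s < 1 ∧ p = (1 - s) • v + s • w

theorem Between.symm {v p w : Plane} (h : Between v p w) : Between w p v := by
  obtain ⟨s, h0, h1, rfl⟩ := h
  exact ⟨1 - s, by linarith, by linarith, by rw [sub_sub_cancel, add_comm]⟩

theorem area_split {u v w p : Plane} (h : Between v p w) :
    ∃ s : ℝ, 0 < s ∧ s < 1 ∧ area u v p = s * area u v w ∧ area u p w = (1 - s) * area u v w := by
  obtain ⟨s, h0, h1, rfl⟩ := h
  refine ⟨s, h0, h1, ?_, ?_⟩ <;> simp [area] <;> ring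

/-! ### Dissecting a triangle by a segment from a vertex -/

theorem hull_split (u : Plane) {v w p : Plane} (h : Between v p w) :
    convexHull ℝ {u, v, p} ∪ convexHull ℝ {u, w, p} = convexHull ℝ {u, v, w} := by
  have hseg : segment ℝ v w = segment ℝ v p ∪ segment ℝ w p := by
    obtain ⟨s, h0, h1, rfl⟩ := h
    apply Set.Subset.antisymm
    · intro x hx
      rw [segment_eq_image] at hx
      obtain ⟨t, ⟨ht0, ht1⟩, rfl⟩ := hx
      simp only [Set.mem_union, segment_eq_image]
      rcases le_total t s with hts | hts
      · left
        refine ⟨t / s, ⟨by positivity, (div_le_one h0).2 hts⟩, ?_⟩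
        ext i
        simp
        field_simp
        ring
      · right
        have : 0 < 1 - s := by linarith
        refine ⟨(1 - t) / (1 - s), ⟨div_nonneg (by linarith) this.le,
          (div_le_one this).2 (by linarith)⟩, ?_⟩
        ext i
        simp
        field_simp
        ring
    · have hp : (1 - s) • v + s • w ∈ segment ℝ v w :=
        ⟨1 - s, s, by linarith, h0.le, by ring, rfl⟩
      exact Set.union_subset ((convex_segment v w).segment_subset (left_mem_segment ..) hp)
        ((convex_segment v w).segment_subset (right_mem_segment ..) hp)
  simp only [convexHull_insert (Set.insert_nonempty _ _), convexHull_insert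
    (Set.singleton_nonempty _), convexHull_singleton, convexJoin_singletons]
  rw [hseg, convexJoin_union_right]

theorem convex_area_halfplane (u p : Plane) (c : ℝ) : Convex ℝ {x | 0 ≤ c * area u p x} := by
  intro x hx y hy a b ha hb hab
  simp only [Set.mem_ofPred_eq] at *
  have : c * area u p (a • x + b • y) = a * (c * area u p x) + b * (c * area u p y) := by
    obtain rfl : b = 1 - a := by linarith
    simp [area]
    ring
  rw [this]
  positivity

theorem interior_split {u v w p : Plane} (huvw : area u v w ≠ 0) (h : Between v p w) :
    Disjoint (interior (convexHull ℝ {u, v, p})) (interior (convexHull ℝ {u, w, p})) := by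
  obtain ⟨s, h0, h1, e1, e2⟩ := area_split (u := u) h
  have a1 : area u p v = - (s * area u v w) := by rw [← e1]; simp only [area]; ring
  have au : area u p u = 0 := by simp [area]
  have ap : area u p p = 0 := by simp only [area]; ring
  -- The line `u p` separates the two pieces, so a common interior point would have a
  -- neighbourhood contained in that line.
  have s1 : convexHull ℝ {u, v, p} ⊆ {x | 0 ≤ (-area u v w) * area u p x} := by
    refine convexHull_min ?_ (convex_area_halfplane ..)
    rintro x (rfl | rfl | rfl)
    · simp [au]
    · simp only [Set.mem_ofPred_eq, a1]
      have := mul_nonneg h0.le (mul_self_nonneg (area u x w))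
      linarith
    · simp [ap]
  have s2 : convexHull ℝ {u, w, p} ⊆ {x | 0 ≤ area u v w * area u p x} := by
    refine convexHull_min ?_ (convex_area_halfplane ..)
    rintro x (rfl | rfl | rfl)
    · simp [au]
    · simp only [Set.mem_ofPred_eq, e2]
      have := mul_nonneg (sub_nonneg.2 h1.le) (mul_self_nonneg (area u v x))
      linarith
    · simp [ap]
  rw [Set.disjoint_left]
  intro x hx1 hx2
  have hnhds : {y | area u p y = 0} ∈ nhds x := by
    filter_upwards [mem_interior_iff_mem_nhds.1 hx1, mem_interior_iff_mem_nhds.1 hx2]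
      with y hy1 hy2
    have := s1 hy1
    have := s2 hy2
    simp only [Set.mem_ofPred_eq] at *
    exact (mul_eq_zero.1 (by linarith : area u v w * area u p y = 0)).resolve_left huvw
  have hx0 : x ∈ {y | area u p y = 0} := mem_of_mem_nhds hnhds
  rw [Set.mem_ofPred_eq] at hx0
  -- Moving from `x` in the direction `w - u` leaves the line `u p`.
  have hcont : Continuous fun t : ℝ => x + t • (w - u) := by fun_prop
  have hev : ∀ᶠ t in nhds (0 : ℝ), area u p (x + t • (w - u)) = 0 :=
    hcont.continuousAt.eventually_mem (s := {y | area u p y = 0}) (by simpa using hnhds)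
  obtain ⟨t, ht0, ht⟩ : ∃ t : ℝ, t ≠ 0 ∧ area u p (x + t • (w - u)) = 0 := by
    have h2 : ∀ᶠ t in nhdsWithin (0 : ℝ) {0}ᶜ, area u p (x + t • (w - u)) = 0 :=
      hev.filter_mono nhdsWithin_le_nhds
    obtain ⟨t, ht, ht0⟩ := (h2.and self_mem_nhdsWithin).exists
    exact ⟨t, ht0, ht⟩
  have : area u p (x + t • (w - u)) = area u p x + t * area u p w := by
    simp [area]
    ring
  rw [this, hx0, e2, zero_add] at ht
  exact mul_ne_zero ht0 (mul_ne_zero (by linarith) huvw) ht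

/-! ### Canonical directions inside a sector -/

theorem exists_canonical_index {α θ β : ℝ} (hα0 : 0 < α) (hα : α ≤ Real.pi / 3)
    (hθ0 : 0 ≤ θ) (hθ : θ ≤ Real.pi) (hβ : α ≤ β) :
    ∃ i : ℤ, 0 ≤ i ∧ i ≤ ⌊4 * Real.pi / α⌋ ∧ θ < i * (α / 2) ∧ i * (α / 2) < θ + β := by
  have hlo := Int.floor_le (θ / (α / 2))
  have hhi := Int.lt_floor_add_one (θ / (α / 2))
  have hnn : 0 ≤ ⌊θ / (α / 2)⌋ := Int.floor_nonneg.2 (by positivity)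
  rw [le_div_iff₀ (by positivity)] at hlo
  rw [div_lt_iff₀ (by positivity)] at hhi
  refine ⟨⌊θ / (α / 2)⌋ + 1, by omega, ?_, ?_, ?_⟩
  · rw [Int.le_floor, le_div_iff₀ hα0]
    push_cast
    linarith
  · push_cast
    linarith
  · push_cast
    linarith

/-- Every vector of the plane has polar coordinates with angle in `[0, π]`, if negative radii are
allowed. -/
theorem exists_polar_s17 (a : Plane) :
    ∃ r θ : ℝ, 0 ≤ θ ∧ θ ≤ Real.pi ∧ a 0 = r * Real.cos θ ∧ a 1 = r * Real.sin θ := by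
  set z : ℂ := ⟨a 0, a 1⟩ with hz
  have h0 : ‖z‖ * Real.cos z.arg = a 0 := Complex.norm_mul_cos_arg z
  have h1 : ‖z‖ * Real.sin z.arg = a 1 := Complex.norm_mul_sin_arg z
  rcases le_total 0 z.arg with h | h
  · exact ⟨‖z‖, z.arg, h, Complex.arg_le_pi z, h0.symm, h1.symm⟩
  · refine ⟨-‖z‖, z.arg + Real.pi, by linarith [Complex.neg_pi_lt_arg z], by linarith, ?_, ?_⟩
    · rw [Real.cos_add_pi]; linarith
    · rw [Real.sin_add_pi]; linarith

theorem exists_cut_of_pos {α : ℝ} (hα0 : 0 < α) (hα : α ≤ Real.pi / 3) {u v w : Plane}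
    (harea : 0 < area u v w) (hang : α ≤ EuclideanGeometry.angle v u w) :
    ∃ p, Between v p w ∧ EdgeCanonical α u p := by
  obtain ⟨r, θ, hθ0, hθ, ha0, ha1⟩ := exists_polar_s17 (v - u)
  set β := EuclideanGeometry.angle v u w with hβ
  obtain ⟨i, hi0, hi1, hlo, hhi⟩ := exists_canonical_index hα0 hα hθ0 hθ hang
  have hcos : Real.cos β * (‖v - u‖ * ‖w - u‖) = inner ℝ (v - u) (w - u) :=
    InnerProductGeometry.cos_angle_mul_norm_mul_norm _ _
  have hsin : Real.sin β * (‖v - u‖ * ‖w - u‖) = area u v w := by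
    refine (InnerProductGeometry.sin_angle_mul_norm_mul_norm _ _).trans ?_
    rw [← Real.sqrt_sq harea.le]
    congr 1
    simp [area, Fin.sum_univ_two, PiLp.inner_apply, -inner_self_eq_norm_sq_to_K]
    ring
  have hin : inner ℝ (v - u) (w - u)
      = (v 0 - u 0) * (w 0 - u 0) + (v 1 - u 1) * (w 1 - u 1) := by
    simp [PiLp.inner_apply, Fin.sum_univ_two]; ring
  have hnn : (0 : ℝ) ≤ ‖v - u‖ * ‖w - u‖ := by positivity
  have hsβ : 0 < Real.sin β := by
    by_contra hcon
    have := mul_nonneg (neg_nonneg.2 (not_lt.1 hcon)) hnn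
    linarith
  have hn : 0 < ‖v - u‖ * ‖w - u‖ := by
    refine lt_of_le_of_ne hnn fun h0 => ?_
    rw [← h0] at hsin
    linarith
  have hβpi : β ≤ Real.pi := InnerProductGeometry.angle_le_pi _ _
  simp only [PiLp.sub_apply] at ha0 ha1
  set N := ‖v - u‖ * ‖w - u‖
  rw [hin] at hcos
  unfold area at hsin
  rw [ha0, ha1] at hcos hsin
  have hr : r ≠ 0 := by
    rintro rfl
    have := mul_pos hsβ hn
    linarith
  have hsq := Real.sin_sq_add_cos_sq θ
  have hb0 : r * (w 0 - u 0) = N * Real.cos (θ + β) := by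
    rw [Real.cos_add]
    linear_combination (-(r * (w 0 - u 0))) * hsq - Real.cos θ * hcos + Real.sin θ * hsin
  have hb1 : r * (w 1 - u 1) = N * Real.sin (θ + β) := by
    rw [Real.sin_add]
    linear_combination (-(r * (w 1 - u 1))) * hsq - Real.sin θ * hcos - Real.cos θ * hsin
  set γ : ℝ := i * (α / 2) with hγ
  -- `sin β • e γ = sin (θ + β - γ) • e θ + sin (γ - θ) • e (θ + β)` for `e t = (cos t, sin t)`.
  have hc : Real.sin β * Real.cos γ = Real.sin (θ + β - γ) * Real.cos θ
      + Real.sin (γ - θ) * Real.cos (θ + β) := by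
    simp only [Real.sin_sub, Real.sin_add, Real.cos_add]
    linear_combination (-(Real.sin β * Real.cos γ)) * hsq
  have hs : Real.sin β * Real.sin γ = Real.sin (θ + β - γ) * Real.sin θ
      + Real.sin (γ - θ) * Real.sin (θ + β) := by
    simp only [Real.sin_sub, Real.sin_add, Real.cos_add]
    linear_combination (-(Real.sin β * Real.sin γ)) * hsq
  have hX : 0 < Real.sin (θ + β - γ) := Real.sin_pos_of_pos_of_lt_pi (by linarith) (by linarith)
  have hY' : 0 < Real.sin (γ - θ) := Real.sin_pos_of_pos_of_lt_pi (by linarith) (by linarith)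
  set X := Real.sin (θ + β - γ)
  obtain ⟨Y, hYdef⟩ : ∃ Y, Y = Real.sin (γ - θ) * r ^ 2 / N := ⟨_, rfl⟩
  have hY : 0 < Y := by rw [hYdef]; positivity
  have hXY : X + Y ≠ 0 := by positivity
  have hYN : Y * N = Real.sin (γ - θ) * r ^ 2 := by rw [hYdef]; field_simp
  have k0 : X * (v 0 - u 0) + Y * (w 0 - u 0) = r * Real.sin β * Real.cos γ := by
    rw [ha0]
    apply mul_left_cancel₀ hr
    linear_combination Y * hb0 + Real.cos (θ + β) * hYN - r ^ 2 * hc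
  have k1 : X * (v 1 - u 1) + Y * (w 1 - u 1) = r * Real.sin β * Real.sin γ := by
    rw [ha1]
    apply mul_left_cancel₀ hr
    linear_combination Y * hb1 + Real.sin (θ + β) * hYN - r ^ 2 * hs
  refine ⟨(1 - Y / (X + Y)) • v + (Y / (X + Y)) • w, ⟨Y / (X + Y), by positivity,
    (div_lt_one (by positivity)).2 (by linarith), rfl⟩, r * Real.sin β / (X + Y),
    div_ne_zero (mul_ne_zero hr hsβ.ne') hXY, i, hi0, hi1, ?_⟩
  ext j
  fin_cases j
  · simp [canonicalDir, ← hγ]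
    field_simp
    linear_combination k0
  · simp [canonicalDir, ← hγ]
    field_simp
    linear_combination k1

/-- A canonical line through a vertex whose angle is at least `α` properly crosses the opposite
side. -/
theorem exists_cut {α : ℝ} (hα0 : 0 < α) (hα : α ≤ Real.pi / 3) {u v w : Plane}
    (harea : area u v w ≠ 0) (hang : α ≤ EuclideanGeometry.angle v u w) :
    ∃ p, Between v p w ∧ EdgeCanonical α u p := by
  rcases lt_or_gt_of_ne harea with h | h
  · obtain ⟨p, hp, hc⟩ := exists_cut_of_pos hα0 hα (u := u) (v := w) (w := v)
      (by simp only [area] at h ⊢; linarith) (by rwa [EuclideanGeometry.angle_comm])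
    exact ⟨p, hp.symm, hc⟩
  · exact exists_cut_of_pos hα0 hα h hang

/-! ### The dissection -/

theorem EdgeCanonical.symm {α : ℝ} {a b : Plane} (h : EdgeCanonical α a b) :
    EdgeCanonical α b a := by
  obtain ⟨t, ht, i, h0, h1, h⟩ := h
  exact ⟨-t, neg_ne_zero.2 ht, i, h0, h1, by rw [neg_smul, ← h, neg_sub]⟩

theorem EdgeCanonical.of_between {α : ℝ} {a b q : Plane} (h : EdgeCanonical α a b)
    (hq : Between a q b) : EdgeCanonical α a q := by
  obtain ⟨t, ht, i, h0, h1, h⟩ := h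
  obtain ⟨s, hs0, hs1, rfl⟩ := hq
  refine ⟨s * t, mul_ne_zero hs0.ne' ht, i, h0, h1, ?_⟩
  rw [mul_smul, ← h]
  module

/-- The angle at `v` of the triangle `u v w` is unchanged when `w` moves to a point of the open
segment `v w`. -/
theorem angle_of_between {u v w p : Plane} (h : Between v p w) :
    EuclideanGeometry.angle u v p = EuclideanGeometry.angle u v w := by
  obtain ⟨s, hs0, hs1, rfl⟩ := h
  unfold EuclideanGeometry.angle
  have : (1 - s) • v + s • w -ᵥ v = s • (w -ᵥ v) := by
    simp only [vsub_eq_sub]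
    module
  rw [this, InnerProductGeometry.angle_smul_right_of_pos _ _ hs0]

/-- If `u p` is canonical and the angle at `v` is at least `α`, the triangle `v u p` is cut by a
canonical line through `v` into the semi-canonical triangles `v u q` and `v p q`. -/
theorem exists_cut_half {α : ℝ} (hα0 : 0 < α) (hα : α ≤ Real.pi / 3) {u v p : Plane}
    (harea : area v u p ≠ 0) (hang : α ≤ EuclideanGeometry.angle u v p)
    (hup : EdgeCanonical α u p) :
    ∃ q, area v u q ≠ 0 ∧ area v p q ≠ 0 ∧
      convexHull ℝ {v, u, q} ∪ convexHull ℝ {v, p, q} = convexHull ℝ {v, u, p} ∧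
      Disjoint (interior (convexHull ℝ {v, u, q})) (interior (convexHull ℝ {v, p, q})) ∧
      EdgeCanonical α v q ∧ EdgeCanonical α u q ∧ EdgeCanonical α p q := by
  obtain ⟨q, hq, hvq⟩ := exists_cut hα0 hα harea hang
  obtain ⟨s, hs0, hs1, e1, e2⟩ := area_split (u := v) hq
  refine ⟨q, ?_, ?_, hull_split v hq, interior_split harea hq, hvq, hup.of_between hq,
    hup.symm.of_between hq.symm⟩
  · rw [e1]
    exact mul_ne_zero hs0.ne' harea
  · have : area v p q = -area v q p := by simp only [area]; ring
    rw [this, e2]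
    exact neg_ne_zero.2 (mul_ne_zero (by linarith) harea)

theorem stmt17 (α : ℝ) (hα0 : 0 < α) (hα : α ≤ Real.pi / 3)
    (u v w : EuclideanSpace ℝ (Fin 2))
    (hind : AffineIndependent ℝ ![u, v, w])
    (h1 : α ≤ EuclideanGeometry.angle w u v)
    (h2 : α ≤ EuclideanGeometry.angle u v w)
    (h3 : α ≤ EuclideanGeometry.angle v w u) :
    ∃ k : ℕ, k ≤ 4 ∧ ∃ A B C : Fin k → EuclideanSpace ℝ (Fin 2),
      (∀ m, AffineIndependent ℝ ![A m, B m, C m]) ∧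
      (∀ m m', m ≠ m' →
        Disjoint (interior (convexHull ℝ {A m, B m, C m}))
          (interior (convexHull ℝ {A m', B m', C m'}))) ∧
      (⋃ m, (convexHull ℝ {A m, B m, C m} : Set (EuclideanSpace ℝ (Fin 2)))) =
        convexHull ℝ {u, v, w} ∧
      (∀ m, (EdgeCanonical α (A m) (B m) ∧ EdgeCanonical α (B m) (C m)) ∨
        (EdgeCanonical α (A m) (B m) ∧ EdgeCanonical α (A m) (C m)) ∨
        (EdgeCanonical α (B m) (C m) ∧ EdgeCanonical α (A m) (C m))) := by
  have harea := (affineIndependent_iff_area u v w).1 hind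
  obtain ⟨p, hp, hup⟩ := exists_cut hα0 hα harea (by rwa [EuclideanGeometry.angle_comm])
  obtain ⟨s, hs0, hs1, e1, e2⟩ := area_split (u := u) hp
  have hav : area v u p ≠ 0 := by
    have : area v u p = -area u v p := by simp only [area]; ring
    rw [this, e1]
    exact neg_ne_zero.2 (mul_ne_zero hs0.ne' harea)
  have haw : area w u p ≠ 0 := by
    have : area w u p = area u p w := by simp only [area]; ring
    rw [this, e2]
    exact mul_ne_zero (by linarith) harea
  obtain ⟨q, q1, q2, qU, qD, qv, qu, qp⟩ := exists_cut_half hα0 hα hav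
    (by rwa [angle_of_between hp]) hup
  obtain ⟨r, r1, r2, rU, rD, hwr, ru, rp⟩ := exists_cut_half hα0 hα haw
    (by rwa [angle_of_between hp.symm, EuclideanGeometry.angle_comm]) hup
  have hU := hull_split u hp
  have hD := interior_split harea hp
  rw [Set.insert_comm u v, Set.insert_comm u w] at hU hD
  have sq1 := interior_mono (Set.subset_union_left.trans qU.subset)
  have sq2 := interior_mono (Set.subset_union_right.trans qU.subset)
  have sr1 := interior_mono (Set.subset_union_left.trans rU.subset)
  have sr2 := interior_mono (Set.subset_union_right.trans rU.subset)
  refine ⟨4, le_rfl, ![v, v, w, w], ![u, p, u, p], ![q, q, r, r], ?_, ?_, ?_, ?_⟩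
  · intro m
    rw [affineIndependent_iff_area]
    fin_cases m
    exacts [q1, q2, r1, r2]
  · intro m m' hm
    fin_cases m <;> fin_cases m'
    exacts [absurd rfl hm, qD, hD.mono sq1 sr1, hD.mono sq1 sr2,
      qD.symm, absurd rfl hm, hD.mono sq2 sr1, hD.mono sq2 sr2,
      (hD.mono sq1 sr1).symm, (hD.mono sq2 sr1).symm, absurd rfl hm, rD,
      (hD.mono sq1 sr2).symm, (hD.mono sq2 sr2).symm, rD.symm, absurd rfl hm]
  · rw [← hU, ← qU, ← rU]
    ext x
    simp [Fin.exists_fin_succ, or_assoc]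
  · intro m
    right; right
    fin_cases m
    exacts [⟨qu, qv⟩, ⟨qp, qv⟩, ⟨ru, hwr⟩, ⟨rp, hwr⟩]
end

section
/- Let u, v, w be affinely independent points in ℝ² and let Δ be the triangle (convex hull) with these vertices. Let β_u and β_v be angles with 0 < β_u ≤ ∠(w, u, v) and 0 < β_v ≤ ∠(w, v, u) and β_u + β_v < π, and let T be the triangle with edge [u, v] whose third vertex z lies strictly on the same side of the line through u and v as w, with ∠(z, u, v) = β_u and ∠(z, v, u) = β_v. Then T ⊆ Δ. -/
/-!
Both conditions on the angles are read off in the frame at `u` and in the frame at `v`. Since `z` and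
`w` lie strictly on the same side of the line `uv`, one has `z - u = s • (v - u) + t • (w - u)` with
`t > 0`, and then also `z - v = (1 - s - t) • (u - v) + t • (w - v)`. Adding a positive multiple of `a`
to a vector not parallel to `a` strictly decreases its angle with `a`; hence the angle bound at `u`
forces `0 ≤ s` and the one at `v` forces `0 ≤ 1 - s - t` (`coeff_nonneg_of_angle_le`). So `z` has
nonnegative barycentric coordinates with respect to `u, v, w`.
-/

open InnerProductGeometry in
/-- Adding a positive multiple of `a` to a vector `c` not parallel to `a` strictly decreases the angle
with `a`. On cosines this is `p * (‖c + k • a‖ - ‖c‖) < k * ‖a‖ ^ 2 * ‖c‖` with `p = ⟪c, a⟫`, which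
follows from the triangle inequality and the strict Cauchy–Schwarz inequality. -/
lemma angle_add_smul_lt {V : Type*} [NormedAddCommGroup V] [InnerProductSpace ℝ V] {a c : V}
    {k : ℝ} (hk : 0 < k) (ha : a ≠ 0) (hc : c ≠ 0) (h0 : 0 < angle c a)
    (hpi : angle c a < Real.pi) : angle (c + k • a) a < angle c a := by
  have hna : 0 < ‖a‖ := norm_pos_iff.2 ha
  have hnc : 0 < ‖c‖ := norm_pos_iff.2 hc
  have hcos : |Real.cos (angle c a)| < 1 := by
    rw [abs_lt]
    constructor
    · rw [← Real.cos_pi]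
      exact Real.cos_lt_cos_of_nonneg_of_le_pi h0.le le_rfl hpi
    · rw [← Real.cos_zero]
      exact Real.cos_lt_cos_of_nonneg_of_le_pi le_rfl hpi.le h0
  have hp : |inner ℝ c a| < ‖c‖ * ‖a‖ := by
    rw [← cos_angle_mul_norm_mul_norm, abs_mul, abs_of_pos (mul_pos hnc hna)]
    exact mul_lt_of_lt_one_left (mul_pos hnc hna) hcos
  have hb : c + k • a ≠ 0 := by
    intro hb
    -- otherwise `c` is a negative multiple of `a`, so the angle is `π`
    have : c = (-k) • a := by rw [neg_smul]; exact eq_neg_of_add_eq_zero_left hb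
    rw [this, angle_smul_left_of_neg _ _ (by linarith), angle_neg_left, angle_self ha] at hpi
    linarith
  have hnb : 0 < ‖c + k • a‖ := norm_pos_iff.2 hb
  have htri : |‖c + k • a‖ - ‖c‖| ≤ k * ‖a‖ := by
    have := abs_norm_sub_norm_le (c + k • a) c
    rwa [add_sub_cancel_left, norm_smul, Real.norm_of_nonneg hk.le] at this
  have key : inner ℝ c a * (‖c + k • a‖ - ‖c‖) < ‖c‖ * ‖a‖ * (k * ‖a‖) := by
    refine (le_abs_self _).trans_lt ?_
    rw [abs_mul]
    exact (mul_le_mul_of_nonneg_left htri (abs_nonneg _)).trans_lt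
      (mul_lt_mul_of_pos_right hp (mul_pos hk hna))
  by_contra! hle
  have hcc := Real.cos_le_cos_of_nonneg_of_le_pi (angle_nonneg c a) (angle_le_pi _ _) hle
  rw [cos_angle, cos_angle, div_le_div_iff₀ (mul_pos hnb hna) (mul_pos hnc hna), inner_add_left,
    real_inner_smul_left, real_inner_self_eq_norm_sq, ← mul_assoc, ← mul_assoc,
    mul_le_mul_iff_left₀ hna] at hcc
  nlinarith

open InnerProductGeometry in
/-- In the half-plane `t > 0`, a direction `s • a + t • b` making with `a` an angle no larger than `b`
does lies in the cone spanned by `a` and `b`. -/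
lemma coeff_nonneg_of_angle_le {V : Type*} [NormedAddCommGroup V] [InnerProductSpace ℝ V]
    {a b c : V} {s t : ℝ} (ht : 0 < t) (hc' : c = s • a + t • b) (ha : a ≠ 0) (hc : c ≠ 0)
    (h0 : 0 < angle c a) (hpi : angle c a < Real.pi) (hle : angle c a ≤ angle b a) : 0 ≤ s := by
  by_contra! hs
  have h := angle_add_smul_lt (neg_pos.2 hs) ha hc h0 hpi
  have hb : c + (-s) • a = t • b := by rw [hc']; module
  rw [hb, angle_smul_left_of_pos _ _ ht] at h
  linarith

theorem stmt18 (u v w z : EuclideanSpace ℝ (Fin 2))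
    (hind : AffineIndependent ℝ ![u, v, w])
    (βu βv : ℝ) (hβu0 : 0 < βu) (hβu : βu ≤ EuclideanGeometry.angle w u v)
    (hβv0 : 0 < βv) (hβv : βv ≤ EuclideanGeometry.angle w v u)
    (hsum : βu + βv < Real.pi)
    (hside : (affineSpan ℝ ({u, v} : Set (EuclideanSpace ℝ (Fin 2)))).SSameSide z w)
    (hzu : EuclideanGeometry.angle z u v = βu)
    (hzv : EuclideanGeometry.angle z v u = βv) :
    (convexHull ℝ {u, v, z} : Set (EuclideanSpace ℝ (Fin 2))) ⊆
      convexHull ℝ {u, v, w} := by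
  have huv : u ≠ v := fun h => by
    have := hind.injective (a₁ := 0) (a₂ := 1) (by simpa using h)
    simp at this
  have hu := left_mem_affineSpan_pair ℝ u v
  have hv := right_mem_affineSpan_pair ℝ u v
  obtain ⟨hz, hw, p, hp, hray⟩ := (AffineSubspace.sSameSide_iff_exists_left hu).1 hside
  have hzu' : z - u ≠ 0 := sub_ne_zero.2 fun h => hz (h ▸ hu)
  have hzv' : z - v ≠ 0 := sub_ne_zero.2 fun h => hz (h ▸ hv)
  have hwp : w - p ≠ 0 := sub_ne_zero.2 fun h => hw (h ▸ hp)
  obtain ⟨t, ht, hzt⟩ := hray.symm.exists_pos_left hwp hzu'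
  obtain ⟨k, rfl⟩ := mem_affineSpan_pair_iff_exists_lineMap_eq.1 hp
  simp only [AffineMap.lineMap_apply, vsub_eq_sub, vadd_eq_add] at hzt
  obtain ⟨s, hs⟩ : ∃ s : ℝ, s = -(t * k) := ⟨_, rfl⟩
  have hzs : z - u = s • (v - u) + t • (w - u) := by
    rw [← hzt, hs]; module
  have hzs' : z - v = (1 - s - t) • (u - v) + t • (w - v) := by
    have : z - v = (z - u) + (u - v) := by abel
    rw [this, hzs]; module
  simp only [EuclideanGeometry.angle, vsub_eq_sub] at hzu hzv hβu hβv
  have hs0 : 0 ≤ s := coeff_nonneg_of_angle_le ht hzs (sub_ne_zero.2 huv.symm) hzu'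
    (by linarith) (by linarith) (by linarith)
  have hr0 : 0 ≤ 1 - s - t := coeff_nonneg_of_angle_le ht hzs' (sub_ne_zero.2 huv) hzv'
    (by linarith) (by linarith) (by linarith)
  have hmem : ∀ x ∈ ({u, v, w} : Set (EuclideanSpace ℝ (Fin 2))),
      x ∈ convexHull ℝ {u, v, w} := fun x hx => subset_convexHull ℝ _ hx
  refine convexHull_min ?_ (convex_convexHull ℝ _)
  have hzmem : z ∈ convexHull ℝ {u, v, w} := by
    have h := (convex_convexHull ℝ {u, v, w}).sum_mem (t := Finset.univ)
      (w := ![1 - s - t, s, t]) (z := ![u, v, w])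
      (by simp [Fin.forall_fin_succ, hr0, hs0, ht.le])
      (by simp [Fin.sum_univ_succ])
      (by simp [Fin.forall_fin_succ, hmem])
    have hz' : z = (1 - s - t) • u + s • v + t • w := by
      rw [← sub_add_cancel z u, hzs]; module
    rw [hz']
    simpa [Fin.sum_univ_three] using h
  rintro x (rfl | rfl | rfl)
  · exact hmem _ (by simp)
  · exact hmem _ (by simp)
  · exact hzmem
end
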